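/- Let M be a compact connected boundaryless topological manifold of dimension n with a compatible metric and let f : M → M be an expansive homeomorphism such that the closure of Per_H equals M. Then every point of Per_H admits a local product structure; consequently, the set of points of M admitting a local product structure is open and dense in M. -/

import Mathlib

open Metric Set

variable {M : Type*} [MetricSpace M]

/-- Iterates of a homeomorphism, indexed by `ℤ`. -/
def iterZ (f : M ≃ₜ M) (k : ℤ) (x : M) : M := (f.toEquiv ^ k) x

/-- `f` is expansive with expansivity constant `α`. -/
def IsExpansive (f : M ≃ₜ M) (α : ℝ) : Prop :=
  ∀ x y : M, x ≠ y → ∃ k : ℤ, α < dist (iterZ f k x) (iterZ f k y)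

/-- Stable set of `x`. -/
def Ws (f : M ≃ₜ M) (x : M) : Set M :=
  {y | Filter.Tendsto (fun k : ℤ => dist (iterZ f k x) (iterZ f k y)) Filter.atTop (nhds 0)}

/-- Unstable set of `x`. -/
def Wu (f : M ≃ₜ M) (x : M) : Set M :=
  {y | Filter.Tendsto (fun k : ℤ => dist (iterZ f k x) (iterZ f k y)) Filter.atBot (nhds 0)}

/-- Local (`ε`-local) stable set of `x`. -/
def WsLoc (f : M ≃ₜ M) (ε : ℝ) (x : M) : Set M :=
  {y | ∀ k : ℤ, 0 ≤ k → dist (iterZ f k x) (iterZ f k y) ≤ ε}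

/-- Local (`ε`-local) unstable set of `x`. -/
def WuLoc (f : M ≃ₜ M) (ε : ℝ) (x : M) : Set M :=
  {y | ∀ k : ℤ, k ≤ 0 → dist (iterZ f k x) (iterZ f k y) ≤ ε}

/-- The model space `ℝ^r × ℝ^{n-r}`. -/
abbrev ModelSp (n r : ℕ) := (Fin r → ℝ) × (Fin (n - r) → ℝ)

/-- The model hyperbolic linear map `L(a,b) = (a/2, 2b)`. -/
noncomputable def modelL (n r : ℕ) : ModelSp n r → ModelSp n r :=
  fun q => (fun i => q.1 i / 2, fun i => 2 * q.2 i)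

/-- Topologically hyperbolic periodic points of index `r` (`Per_H^r`). -/
def PerHr (f : M ≃ₜ M) (n r : ℕ) : Set M :=
  {p | ∃ l : ℕ, 1 ≤ l ∧ (f.toEquiv ^ l) p = p ∧
    ∃ (U : Set M) (V : Set (ModelSp n r)) (h : U ≃ₜ V),
      IsOpen U ∧ IsOpen V ∧ (0 : ModelSp n r) ∈ V ∧
      ∃ hp : p ∈ U, ((h ⟨p, hp⟩ : V) : ModelSp n r) = 0 ∧
        ∀ z : M, ∀ hz : z ∈ U, ∀ hz' : (f.toEquiv ^ l) z ∈ U,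
          ((h ⟨(f.toEquiv ^ l) z, hz'⟩ : V) : ModelSp n r) = modelL n r (h ⟨z, hz⟩)}

/-- All topologically hyperbolic periodic points (`Per_H`). -/
def PerH (f : M ≃ₜ M) (n : ℕ) : Set M := ⋃ r ∈ Finset.range (n + 1), PerHr f n r

/-- `p` admits a local product structure. -/
def AdmitsLPS (f : M ≃ₜ M) (n : ℕ) (p : M) : Prop :=
  ∃ (k : ℕ) (h : (Fin k → ℝ) × (Fin (n - k) → ℝ) → M) (ε : ℝ),
    0 < ε ∧ Topology.IsEmbedding h ∧ p ∈ Set.range h ∧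
    ∀ x : Fin k → ℝ, ∀ y : Fin (n - k) → ℝ,
      h '' ({x} ×ˢ univ) = WsLoc f ε (h (x, y)) ∩ Set.range h ∧
      h '' (univ ×ˢ {y}) = WuLoc f ε (h (x, y)) ∩ Set.range h



open MeasureTheory in
lemma nullLag_pointwise {n : ℕ} (i0 : Fin n) (u : Fin n → (Fin n → ℝ) → ℝ)
    (hu : ∀ i, ContDiff ℝ 2 (u i)) (x : Fin n → ℝ) :
    ∑ σ : Equiv.Perm (Fin n), ((Equiv.Perm.sign σ : ℤ) : ℝ) *
      fderiv ℝ (fun y => ∏ i ∈ Finset.univ.erase i0, fderiv ℝ (u i) y (Pi.single (σ i) 1)) x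
        (Pi.single (σ i0) 1) = 0 := by
  have hd : ∀ (i j : Fin n), DifferentiableAt ℝ (fun y => fderiv ℝ (u i) y (Pi.single j 1)) x := by
    intro i j
    have h1 : ContDiff ℝ 1 (fderiv ℝ (u i)) := (hu i).fderiv_right (by norm_num)
    exact ((h1.clm_apply contDiff_const).differentiable (by norm_num)) x
  have key : ∀ σ : Equiv.Perm (Fin n),
      fderiv ℝ (fun y => ∏ i ∈ Finset.univ.erase i0, fderiv ℝ (u i) y (Pi.single (σ i) 1)) x
        (Pi.single (σ i0) 1) = ∑ k ∈ Finset.univ.erase i0,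
          (∏ i ∈ (Finset.univ.erase i0).erase k, fderiv ℝ (u i) x (Pi.single (σ i) 1)) *
            (fderiv ℝ (fderiv ℝ (u k)) x (Pi.single (σ i0) 1) (Pi.single (σ k) 1)) := by
    intro σ
    have h := HasFDerivAt.finsetProd (u := Finset.univ.erase i0)
      (g := fun i y => fderiv ℝ (u i) y (Pi.single (σ i) 1))
      (g' := fun i => fderiv ℝ (fun y => fderiv ℝ (u i) y (Pi.single (σ i) 1)) x) (x := x)
      (fun i _ => (hd i (σ i)).hasFDerivAt)
    rw [h.fderiv]
    simp only [ContinuousLinearMap.sum_apply, ContinuousLinearMap.smul_apply, smul_eq_mul]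
    refine Finset.sum_congr rfl fun k _ => ?_
    congr 1
    have h1 : ContDiff ℝ 1 (fderiv ℝ (u k)) := (hu k).fderiv_right (by norm_num)
    rw [fderiv_clm_apply ((h1.differentiable (by norm_num)) x) (by fun_prop)]
    simp
  simp_rw [key, Finset.mul_sum]
  rw [Finset.sum_comm]
  refine Finset.sum_eq_zero fun k hk => ?_
  have hk' : k ≠ i0 := Finset.ne_of_mem_erase hk
  set B : Equiv.Perm (Fin n) → ℝ := fun σ => ((Equiv.Perm.sign σ : ℤ) : ℝ) *
    ((∏ i ∈ (Finset.univ.erase i0).erase k, fderiv ℝ (u i) x (Pi.single (σ i) 1)) *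
            (fderiv ℝ (fderiv ℝ (u k)) x (Pi.single (σ i0) 1) (Pi.single (σ k) 1))) with hB
  have hs : ∀ σ, B (σ * Equiv.swap i0 k) = - B σ := by
    intro σ
    simp only [hB, Equiv.Perm.sign_mul, Equiv.Perm.sign_swap hk'.symm, Equiv.Perm.mul_apply,
      Equiv.swap_apply_left, Equiv.swap_apply_right]
    have e1 : ∏ i ∈ (Finset.univ.erase i0).erase k,
        fderiv ℝ (u i) x (Pi.single (σ (Equiv.swap i0 k i)) 1) =
        ∏ i ∈ (Finset.univ.erase i0).erase k, fderiv ℝ (u i) x (Pi.single (σ i) 1) := by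
      refine Finset.prod_congr rfl fun i hi => ?_
      rw [Equiv.swap_apply_of_ne_of_ne]
      · exact Finset.ne_of_mem_erase (Finset.mem_of_mem_erase hi)
      · exact Finset.ne_of_mem_erase hi
    have e2 := ((hu k).contDiffAt (x := x)).isSymmSndFDerivAt (by simp)
    rw [e1, e2 (Pi.single (σ k) 1) (Pi.single (σ i0) 1)]
    push_cast
    ring
  have h2 : ∑ σ, B σ = ∑ σ, B (σ * Equiv.swap i0 k) :=
    (Equiv.sum_comp (Equiv.mulRight (Equiv.swap i0 k)) B).symm
  have h3 : ∑ σ, B σ = - ∑ σ, B σ := by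
    conv_lhs => rw [h2]
    simp [hs]
  change ∑ σ, B σ = 0
  linarith

open MeasureTheory in
lemma nullLag {n : ℕ} (i0 : Fin n) (u : Fin n → (Fin n → ℝ) → ℝ)
    (hu : ∀ i, ContDiff ℝ 2 (u i)) (hc : HasCompactSupport (u i0)) :
    ∫ x, (Matrix.of fun j i => fderiv ℝ (u i) x (Pi.single j 1)).det = 0 := by
  have hd1 : ∀ (i j : Fin n), ContDiff ℝ 1 (fun y => fderiv ℝ (u i) y (Pi.single j 1)) := by
    intro i j
    have h1 : ContDiff ℝ 1 (fderiv ℝ (u i)) := (hu i).fderiv_right (by norm_num)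
    exact h1.clm_apply contDiff_const
  simp_rw [Matrix.det_apply', Matrix.of_apply]
  have hP : ∀ σ : Equiv.Perm (Fin n), ContDiff ℝ 1
      (fun y => ∏ i ∈ Finset.univ.erase i0, fderiv ℝ (u i) y (Pi.single (σ i) 1)) :=
    fun σ => contDiff_prod fun i _ => hd1 i (σ i)
  have hsplit : ∀ (σ : Equiv.Perm (Fin n)) x, ∏ i, fderiv ℝ (u i) x (Pi.single (σ i) 1) =
     fderiv ℝ (u i0) x (Pi.single (σ i0) 1) *
      ∏ i ∈ Finset.univ.erase i0, fderiv ℝ (u i) x (Pi.single (σ i) 1) := fun σ x =>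
    (Finset.mul_prod_erase _ _ (Finset.mem_univ i0)).symm
  simp_rw [hsplit]
  have hcd : ∀ j, HasCompactSupport (fun x => fderiv ℝ (u i0) x (Pi.single j 1)) := fun j =>
    hc.fderiv_apply (𝕜 := ℝ) (Pi.single j 1)
  have i1 : ∀ σ : Equiv.Perm (Fin n), Integrable (fun x => fderiv ℝ (u i0) x (Pi.single (σ i0) 1) *
      ∏ i ∈ Finset.univ.erase i0, fderiv ℝ (u i) x (Pi.single (σ i) 1)) := fun σ =>
    ((hd1 i0 (σ i0)).continuous.mul (hP σ).continuous).integrable_of_hasCompactSupport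
      ((hcd (σ i0)).mul_right)
  have hf : ∀ (σ : Equiv.Perm (Fin n)), Continuous (fun x => fderiv ℝ (fun y => ∏ i ∈ Finset.univ.erase i0, fderiv ℝ (u i) y (Pi.single (σ i) 1)) x
        (Pi.single (σ i0) 1)) := fun σ => 
    ((hP σ).continuous_fderiv (by norm_num)).clm_apply continuous_const
  have i2 : ∀ σ : Equiv.Perm (Fin n), Integrable (fun x => u i0 x *
     fderiv ℝ (fun y => ∏ i ∈ Finset.univ.erase i0, fderiv ℝ (u i) y (Pi.single (σ i) 1)) x
        (Pi.single (σ i0) 1)) := fun σ =>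
    ((hu i0).continuous.mul (hf σ)).integrable_of_hasCompactSupport hc.mul_right
  have i3 : ∀ σ : Equiv.Perm (Fin n), Integrable (fun x => u i0 x *
     ∏ i ∈ Finset.univ.erase i0, fderiv ℝ (u i) x (Pi.single (σ i) 1)) := fun σ =>
    ((hu i0).continuous.mul (hP σ).continuous).integrable_of_hasCompactSupport hc.mul_right
  rw [integral_finsetSum _ (fun σ _ => (i1 σ).const_mul _)]
  simp_rw [integral_const_mul]
  have hibp : ∀ σ : Equiv.Perm (Fin n), ∫ x, fderiv ℝ (u i0) x (Pi.single (σ i0) 1) *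
      ∏ i ∈ Finset.univ.erase i0, fderiv ℝ (u i) x (Pi.single (σ i) 1) =
      - ∫ x, u i0 x *
     fderiv ℝ (fun y => ∏ i ∈ Finset.univ.erase i0, fderiv ℝ (u i) y (Pi.single (σ i) 1)) x
        (Pi.single (σ i0) 1) := by
    intro σ
    rw [integral_mul_fderiv_eq_neg_fderiv_mul_of_integrable (i1 σ) (i2 σ) (i3 σ)
      (fun x _ => (hu i0).differentiable (by norm_num) x)
      (fun x _ => (hP σ).differentiable (by norm_num) x), neg_neg]
  simp_rw [hibp, mul_neg, Finset.sum_neg_distrib, ← integral_const_mul]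
  rw [← integral_finsetSum _ (fun σ _ => (i2 σ).const_mul _), neg_eq_zero]
  have : ∀ x, ∑ σ : Equiv.Perm (Fin n), ((Equiv.Perm.sign σ : ℤ) : ℝ) * (u i0 x *
     fderiv ℝ (fun y => ∏ i ∈ Finset.univ.erase i0, fderiv ℝ (u i) y (Pi.single (σ i) 1)) x
        (Pi.single (σ i0) 1)) = 0 := by
    intro x
    have := nullLag_pointwise i0 u hu x
    rw [← mul_zero (u i0 x), ← this, Finset.mul_sum]
    exact Finset.sum_congr rfl fun σ _ => by ring
  simp [this]

/-- the Jacobian determinant (transposed) -/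
noncomputable def jac {n : ℕ} (u : (Fin n → ℝ) → (Fin n → ℝ)) (x : Fin n → ℝ) : ℝ :=
  (Matrix.of fun j i => fderiv ℝ (fun y => u y i) x (Pi.single j 1)).det

open MeasureTheory in
lemma nullLag2 {n : ℕ} (u v : (Fin n → ℝ) → (Fin n → ℝ))
    (hu : ContDiff ℝ 2 u) (hv : ContDiff ℝ 2 v) (hc : HasCompactSupport (fun x => u x - v x)) :
    ∫ x, (jac u x - jac v x) = 0 := by
  classical
  have hu' := contDiff_pi.1 hu
  have hv' := contDiff_pi.1 hv
  -- piecewise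
  let w : Finset (Fin n) → Fin n → (Fin n → ℝ) → ℝ := fun S i y => if i ∈ S then u y i else v y i
  have hw : ∀ S i, ContDiff ℝ 2 (w S i) := by
    intro S i
    by_cases h : i ∈ S
    · simpa [w, h] using hu' i
    · simpa [w, h] using hv' i
  let J : Finset (Fin n) → (Fin n → ℝ) → ℝ := fun S x =>
    (Matrix.of fun j i => fderiv ℝ (w S i) x (Pi.single j 1)).det
  have hJc : ∀ S, Continuous (J S) := by
    intro S
    refine Continuous.matrix_det ?_
    refine continuous_matrix fun i j => ?_
    simp only [Matrix.of_apply]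
    exact ((hw S j).continuous_fderiv (by norm_num)).clm_apply continuous_const
  have hJs : ∀ S, HasCompactSupport (fun x => J S x - J ∅ x) := by
    intro S
    refine HasCompactSupport.intro hc.isCompact fun x hx => ?_
    have hx' : ∀ᶠ y in nhds x, u y = v y := by
      have : (tsupport fun x => u x - v x)ᶜ ∈ nhds x :=
        (isClosed_tsupport _).isOpen_compl.mem_nhds hx
      filter_upwards [this] with y hy
      have := image_eq_zero_of_notMem_tsupport hy
      exact sub_eq_zero.1 this
    have : ∀ i, fderiv ℝ (w S i) x = fderiv ℝ (w ∅ i) x := by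
      intro i
      refine Filter.EventuallyEq.fderiv_eq ?_
      filter_upwards [hx'] with y hy
      simp [w, hy]
    simp [J, this]
  have hInteg : ∀ S, Integrable (fun x => J S x - J ∅ x) := fun S =>
    ((hJc S).sub (hJc ∅)).integrable_of_hasCompactSupport (hJs S)
  have main : ∀ S : Finset (Fin n), ∫ x, (J S x - J ∅ x) = 0 := by
    intro S
    induction S using Finset.induction_on with
    | empty => simp
    | insert a S ha ih =>
      let z : Fin n → (Fin n → ℝ) → ℝ := Function.update (w S) a (fun y => u y a - v y a)
      have hz : ∀ i, ContDiff ℝ 2 (z i) := by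
        intro i
        by_cases h : i = a
        · subst h; simpa [z] using (hu' i).sub (hv' i)
        · simpa [z, h] using hw S i
      have hza : HasCompactSupport (z a) := by
        have : z a = (fun t : Fin n → ℝ => t a) ∘ (fun x => u x - v x) := by
          ext y; simp [z]
        rw [this]
        exact hc.comp_left rfl
      have h0 := nullLag a z hz hza
      have hd : ∀ x, J (insert a S) x - J ∅ x = (J S x - J ∅ x) +
          (Matrix.of fun j i => fderiv ℝ (z i) x (Pi.single j 1)).det := by
        intro x
        have e1 : (Matrix.of fun j i => fderiv ℝ (w (insert a S) i) x (Pi.single j 1)) =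
          (Matrix.of fun j i => fderiv ℝ (w S i) x (Pi.single j 1)).updateCol a
            ((fun j => fderiv ℝ (w S a) x (Pi.single j 1)) +
              fun j => fderiv ℝ (z a) x (Pi.single j 1)) := by
          ext j i
          by_cases h : i = a
          · subst h
            simp only [Matrix.of_apply, Matrix.updateCol_self, Pi.add_apply]
            have : w (insert i S) i = fun y => w S i y + z i y := by
              ext y; simp [w, z, ha]
            rw [this, fderiv_fun_add ((hw S i).differentiable (by norm_num) x)
              ((hz i).differentiable (by norm_num) x)]
            rfl
          · simp only [Matrix.of_apply, Matrix.updateCol_ne h]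
            have : w (insert a S) i = w S i := by
              ext y; simp [w, h]
            rw [this]
        have e2 : (Matrix.of fun j i => fderiv ℝ (z i) x (Pi.single j 1)) =
          (Matrix.of fun j i => fderiv ℝ (w S i) x (Pi.single j 1)).updateCol a
              (fun j => fderiv ℝ (z a) x (Pi.single j 1)) := by
          ext j i
          by_cases h : i = a
          · subst h; simp
          · simp [z, h]
        have e3 : (Matrix.of fun j i => fderiv ℝ (w S i) x (Pi.single j 1)) =
          (Matrix.of fun j i => fderiv ℝ (w S i) x (Pi.single j 1)).updateCol a
              (fun j => fderiv ℝ (w S a) x (Pi.single j 1)) := by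
          ext j i
          by_cases h : i = a
          · subst h; simp
          · simp [h]
        have : J (insert a S) x = J S x +
          (Matrix.of fun j i => fderiv ℝ (z i) x (Pi.single j 1)).det := by
          simp only [J]
          rw [e1, Matrix.det_updateCol_add, ← e3, ← e2]
        rw [this]; ring
      have hi : Integrable (fun x => (Matrix.of fun j i => fderiv ℝ (z i) x (Pi.single j 1)).det) := by
        have := (hInteg (insert a S)).sub (hInteg S)
        refine this.congr (Filter.Eventually.of_forall fun x => ?_)
        simp only [Pi.sub_apply]
        rw [hd x]; ring
      simp_rw [hd]
      rw [integral_add (hInteg S) hi, ih, h0, add_zero]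
  have := main Finset.univ
  simpa [J, w, jac] using this


lemma exists_step (κ : ℝ) (hκ : 0 < κ) : ∃ s β : ℝ → ℝ, ContDiff ℝ 2 s ∧ Continuous β ∧
    (∀ t, HasDerivAt s (β t) t) ∧ (∀ t, κ ≤ |t| → β t = 0) ∧ (∀ t, 0 ≤ β t) ∧ β 0 ≠ 0 := by
  let b : ContDiffBump (0 : ℝ) := ⟨κ / 2, κ, by positivity, by linarith⟩
  have hb : ContDiff ℝ 2 (b : ℝ → ℝ) := b.contDiff
  have hd : ∀ t, HasDerivAt (fun t => ∫ u in (0 : ℝ)..t, b u) (b t) t := fun t =>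
    intervalIntegral.integral_hasDerivAt_right (b.continuous.intervalIntegrable _ _)
      (b.continuous.stronglyMeasurableAtFilter _ _) b.continuous.continuousAt
  refine ⟨fun t => ∫ u in (0 : ℝ)..t, b u, b, ?_, b.continuous, hd, ?_, fun t => b.nonneg, ?_⟩
  · have : (2 : WithTop ℕ∞) = 1 + 1 := by norm_num
    rw [this, contDiff_succ_iff_deriv]
    refine ⟨fun t => (hd t).differentiableAt, by simp, ?_⟩
    have : deriv (fun t => ∫ u in (0 : ℝ)..t, b u) = b := by
      ext t; exact (hd t).deriv
    rw [this]; exact b.contDiff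
  · intro t ht
    apply b.zero_of_le_dist
    simpa [Real.dist_eq] using ht
  · have : b 0 = 1 := b.one_of_mem_closedBall (mem_closedBall_self (by positivity))
    rw [this]; norm_num

lemma jac_step {n : ℕ} {s β : ℝ → ℝ} (hs : ∀ t, HasDerivAt s (β t) t)
    {F : (Fin n → ℝ) → (Fin n → ℝ)} (hF : ContDiff ℝ 2 F) (x : Fin n → ℝ) :
    jac (fun y i => s (F y i)) x = (∏ i, β (F x i)) * jac F x := by
  unfold jac
  rw [← Matrix.det_mul_row]
  congr 1
  ext j i
  simp only [Matrix.of_apply]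
  have h1 : HasFDerivAt (fun y => F y i) (fderiv ℝ (fun y => F y i) x) x :=
    ((contDiff_pi.1 hF i).differentiable (by norm_num) x).hasFDerivAt
  have := (hs (F x i)).comp_hasFDerivAt x h1
  have h2 := this.fderiv
  simp only [Function.comp_def] at h2
  rw [h2]
  simp

lemma jac_congr {n : ℕ} {F G : (Fin n → ℝ) → (Fin n → ℝ)} {x : Fin n → ℝ}
    (h : F =ᶠ[nhds x] G) : jac F x = jac G x := by
  unfold jac
  congr 1
  ext j i
  simp only [Matrix.of_apply]
  congr 1
  refine Filter.EventuallyEq.fderiv_eq ?_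
  filter_upwards [h] with y hy
  rw [hy]

lemma jac_id {n : ℕ} (x : Fin n → ℝ) : jac (fun y => y) x = 1 := by
  unfold jac
  rw [← Matrix.det_one (n := Fin n) (R := ℝ)]
  congr 1
  ext j i
  simp only [Matrix.of_apply]
  have : HasFDerivAt (fun y : Fin n → ℝ => y i) (ContinuousLinearMap.proj (R := ℝ) (φ := fun _ : Fin n => ℝ) i) x :=
    (ContinuousLinearMap.proj (R := ℝ) (φ := fun _ : Fin n => ℝ) i).hasFDerivAt
  rw [this.fderiv]
  simp [Matrix.one_apply, Pi.single_apply, eq_comm]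

open MeasureTheory in
lemma ess_core {n : ℕ} (A V : (Fin n → ℝ) → (Fin n → ℝ)) (hA : Continuous A) (hV : Continuous V)
    (O : Set (Fin n → ℝ)) (hO : IsOpen O) (hOb : Bornology.IsBounded O) (h0 : (0 : Fin n → ℝ) ∈ O)
    (hVO : ∀ x, x ∉ O → V x = 0) (hid : ∀ᶠ x in nhds (0 : Fin n → ℝ), A x = x)
    (hA0 : ∀ x ∈ closure O, A x = 0 → x = 0) : ∃ x ∈ closure O, A x + V x = 0 := by
  by_contra! hcon
  have hC : IsCompact (closure O) := hOb.isCompact_closure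
  obtain ⟨δ, hδ, hball⟩ : ∃ δ > 0, ∀ x ∈ ball (0 : Fin n → ℝ) δ, A x = x ∧ x ∈ O := by
    have := hid.and (hO.mem_nhds h0)
    exact Metric.eventually_nhds_iff_ball.1 this
  obtain ⟨m1, hm1, hm1'⟩ := hC.exists_forall_le' (f := fun x => ‖A x + V x‖) (a := 0)
    (by fun_prop) (fun x hx => norm_pos_iff.2 (hcon x hx))
  obtain ⟨m2, hm2, hm2'⟩ := (hC.diff (isOpen_ball (x := (0 : Fin n → ℝ)) (ε := δ / 2))).exists_forall_le'
    (f := fun x => ‖A x‖) (a := 0)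
    (by fun_prop) (fun x hx => norm_pos_iff.2 (fun h => hx.2 (by
      rw [hA0 x hx.1 h]; exact mem_ball_self (by positivity))))
  obtain ⟨κ, hκ, hκ1, hκ2, hκ3⟩ : ∃ κ > 0, 3 * κ ≤ m1 ∧ 2 * κ ≤ m2 ∧ κ ≤ δ / 2 := by
    refine ⟨min (m1 / 3) (min (m2 / 2) (δ / 2)), by positivity, ?_, ?_, ?_⟩
    · have := min_le_left (m1 / 3) (min (m2 / 2) (δ / 2)); linarith
    · have := (min_le_right (m1 / 3) (min (m2 / 2) (δ / 2))).trans (min_le_left _ _); linarith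
    · exact (min_le_right (m1 / 3) (min (m2 / 2) (δ / 2))).trans (min_le_right _ _)
  obtain ⟨A1, hA1, hA1d, hA1e, -⟩ := hA.exists_contDiff_approx_and_eqOn 2
    (ε := fun _ => κ) continuous_const (fun _ => hκ)
    (S := closedBall 0 (δ / 2)) (U := ball 0 δ) isClosed_closedBall
    (isOpen_ball.mem_nhdsSet.2 (closedBall_subset_ball (by linarith)))
    (contDiff_id.contDiffOn.congr fun x hx => (hball x hx).1)
  obtain ⟨V1, hV1, hV1d, hV1s⟩ := hV.exists_contDiff_approx 2
    (ε := fun _ => κ) continuous_const (fun _ => hκ)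
  have hA1 : ContDiff ℝ 2 A1 := hA1
  have hV1 : ContDiff ℝ 2 V1 := hV1
  have hV1O : ∀ x, x ∉ O → V1 x = 0 := by
    intro x hx
    by_contra h
    exact hV1s h (hVO x hx)
  obtain ⟨s, β, hs, hβc, hsd, hβ0, hβn, hβ1⟩ := exists_step κ hκ
  have hprod : ∀ y : Fin n → ℝ, κ ≤ ‖y‖ → ∏ i, β (y i) = 0 := by
    intro y hy
    by_contra h
    rw [← ne_eq, Finset.prod_ne_zero_iff] at h
    have : ‖y‖ < κ := by
      rw [pi_norm_lt_iff hκ]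
      intro i
      by_contra hi
      exact h i (Finset.mem_univ i) (hβ0 _ (not_lt.1 hi))
    linarith
  have hcs : ∀ {F : (Fin n → ℝ) → (Fin n → ℝ)}, ContDiff ℝ 2 F →
      ContDiff ℝ 2 (fun y i => s (F y i)) := by
    intro F hF
    exact contDiff_pi.2 fun i => hs.comp (contDiff_pi.1 hF i)
  have hsum : ContDiff ℝ 2 (fun x => A1 x + V1 x) := hA1.add hV1
  have hnl := nullLag2 (fun y i => s (A1 y i)) (fun y i => s ((A1 y + V1 y) i)) (hcs hA1)
    (hcs hsum) (by
      refine HasCompactSupport.intro hC fun x hx => ?_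
      have : V1 x = 0 := hV1O x fun h => hx (subset_closure h)
      simp [this])
  have hpt : ∀ x, jac (fun y i => s (A1 y i)) x - jac (fun y i => s ((A1 y + V1 y) i)) x
      = ∏ i, β (x i) := by
    intro x
    by_cases hx : x ∈ closure O
    · have e2 : jac (fun y i => s ((A1 y + V1 y) i)) x = 0 := by
        rw [jac_step hsd hsum, hprod, zero_mul]
        have h1 := hm1' x hx
        have h2 := hA1d x
        have h3 := hV1d x
        rw [dist_eq_norm] at h2 h3
        have h4 : ‖A x + V x‖ ≤ ‖A1 x + V1 x‖ + ‖A1 x - A x‖ + ‖V1 x - V x‖ := by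
          have : A x + V x = (A1 x + V1 x) - (A1 x - A x) - (V1 x - V x) := by abel
          rw [this]
          exact (norm_sub_le _ _).trans (by gcongr; exact norm_sub_le _ _)
        linarith
      rw [e2, sub_zero]
      by_cases hb : x ∈ ball (0 : Fin n → ℝ) (δ / 2)
      · have he : A1 =ᶠ[nhds x] fun y => y := by
          filter_upwards [isOpen_ball.mem_nhds hb] with y hy
          rw [hA1e (ball_subset_closedBall hy)]
          exact (hball y (ball_subset_ball (by linarith) hy)).1
        rw [jac_step hsd hA1, jac_congr he, jac_id, he.eq_of_nhds, mul_one]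
      · have h1 := hm2' x ⟨hx, hb⟩
        have h2 := hA1d x
        rw [dist_eq_norm] at h2
        have h4 : ‖A x‖ ≤ ‖A1 x‖ + ‖A1 x - A x‖ := by
          have : A x = A1 x - (A1 x - A x) := by abel
          conv_lhs => rw [this]
          exact norm_sub_le _ _
        rw [jac_step hsd hA1, hprod _ (by linarith), hprod x, zero_mul]
        simp only [mem_ball, dist_zero_right, not_lt] at hb
        linarith
    · have he : (fun y i => s (A1 y i)) =ᶠ[nhds x] fun y i => s ((A1 y + V1 y) i) := by
        filter_upwards [isClosed_closure.isOpen_compl.mem_nhds hx] with y hy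
        have : V1 y = 0 := hV1O y fun h => hy (subset_closure h)
        simp [this]
      rw [jac_congr he, sub_self, hprod]
      by_contra h
      apply hx
      apply subset_closure
      refine (hball x ?_).2
      simp only [mem_ball, dist_zero_right]
      linarith
  simp_rw [hpt] at hnl
  have hcont : Continuous fun x : Fin n → ℝ => ∏ i, β (x i) := by fun_prop
  have hpos := hcont.integral_pos_of_hasCompactSupport_nonneg_nonzero (μ := volume) (x := 0)
    (HasCompactSupport.intro (isCompact_closedBall (0 : Fin n → ℝ) κ) fun x hx => hprod x (by
      simp only [mem_closedBall, dist_zero_right, not_le] at hx; linarith))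
    (fun x => Finset.prod_nonneg fun i _ => hβn _)
    (by rw [Finset.prod_ne_zero_iff]; intro i _; exact hβ1)
  linarith


lemma ess_id {n : ℕ} (F F' : (Fin n → ℝ) → (Fin n → ℝ)) (O : Set (Fin n → ℝ)) (hO : IsOpen O)
    (hOb : Bornology.IsBounded O) (h0 : (0 : Fin n → ℝ) ∈ O) (hF : ContinuousOn F (closure O))
    (hF' : ContinuousOn F' (closure O)) (hfr : ∀ x ∈ frontier O, F' x = F x)
    (hid : ∀ᶠ x in nhds (0 : Fin n → ℝ), F x = x)
    (hz : ∀ x ∈ closure O, F x = 0 → x = 0) : ∃ x ∈ closure O, F' x = 0 := by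
  classical
  obtain ⟨A, hA⟩ := ContinuousMap.exists_restrict_eq (s := closure O) isClosed_closure
    (⟨(closure O).restrict F, hF.restrict⟩ : C(closure O, Fin n → ℝ))
  have hA' : ∀ x ∈ closure O, A x = F x := fun x hx => congrArg (fun φ => φ ⟨x, hx⟩) hA
  have hV : Continuous (O.piecewise (fun x => F' x - F x) (fun _ => 0)) := by
    apply continuous_piecewise
    · intro x hx; simp [hfr x hx]
    · exact hF'.sub hF
    · exact continuousOn_const
  obtain ⟨x, hx, hx0⟩ := ess_core A _ A.continuous hV O hO hOb h0
    (fun x hx => by simp [hx])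
    (by filter_upwards [hid, hO.mem_nhds h0] with x hx hxO
        rw [hA' x (subset_closure hxO), hx])
    (fun x hx h => hz x hx (by rw [← hA' x hx, h]))
  refine ⟨x, hx, ?_⟩
  by_cases hxO : x ∈ O
  · simpa [hxO, hA' x hx] using hx0
  · simp only [hxO, not_false_eq_true, piecewise_eq_of_notMem, add_zero] at hx0
    rw [hfr x ⟨hx, by rwa [hO.interior_eq]⟩, ← hA' x hx, hx0]

/-- radial projection -/
noncomputable def rproj {E : Type*} [NormedAddCommGroup E] [NormedSpace ℝ E] (η : ℝ) (y : E) : E :=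
  (η / max η ‖y‖) • y

section rproj
variable {E : Type*} [NormedAddCommGroup E] [NormedSpace ℝ E] {η : ℝ}
lemma rproj_cont (hη : 0 < η) : Continuous (rproj η : E → E) := by
  unfold rproj
  refine Continuous.smul (Continuous.div continuous_const (by fun_prop) ?_) continuous_id
  intro y
  exact (lt_max_of_lt_left hη).ne'

lemma rproj_norm (hη : 0 < η) (y : E) : ‖rproj η y‖ ≤ η := by
  unfold rproj
  have h : 0 < max η ‖y‖ := lt_max_of_lt_left hη
  rw [norm_smul, Real.norm_of_nonneg (by positivity), div_mul_eq_mul_div, div_le_iff₀ h]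
  gcongr
  exact le_max_right _ _

lemma rproj_eq (hη : 0 < η) {y : E} (hy : ‖y‖ ≤ η) : rproj η y = y := by
  unfold rproj
  rw [max_eq_left hy, div_self hη.ne', one_smul]

lemma rproj_zero (hη : 0 < η) {y : E} (hy : rproj η y = 0) : y = 0 := by
  unfold rproj at hy
  have h : 0 < max η ‖y‖ := lt_max_of_lt_left hη
  rcases smul_eq_zero.1 hy with h1 | h1
  · exact absurd h1 (by positivity)
  · exact h1
end rproj

lemma ess_gen {E₁ E₂ : Type*} [NormedAddCommGroup E₁] [NormedSpace ℝ E₁] [FiniteDimensional ℝ E₁]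
    [NormedAddCommGroup E₂] [NormedSpace ℝ E₂]
    (g : OpenPartialHomeomorph E₁ E₂) (hg0 : (0 : E₁) ∈ g.source) (hg : g 0 = 0)
    (F F' : E₁ → E₂) (O : Set E₁) (hO : IsOpen O)
    (hOb : Bornology.IsBounded O) (h0 : (0 : E₁) ∈ O) (hF : ContinuousOn F (closure O))
    (hF' : ContinuousOn F' (closure O)) (hfr : ∀ x ∈ frontier O, F' x = F x)
    (hid : ∀ᶠ x in nhds (0 : E₁), F x = g x)
    (hz : ∀ x ∈ closure O, F x = 0 → x = 0) : ∃ x ∈ closure O, F' x = 0 := by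
  let n := Module.finrank ℝ E₁
  let T : E₁ ≃L[ℝ] (Fin n → ℝ) := ContinuousLinearEquiv.ofFinrankEq (by simp [n])
  have ht : (0 : E₂) ∈ g.target := by rw [← hg]; exact g.map_source hg0
  obtain ⟨η, hη, hηb⟩ := Metric.nhds_basis_closedBall.mem_iff.1 (g.open_target.mem_nhds ht)
  have hs0 : g.symm 0 = 0 := by rw [← hg, g.left_inv hg0]
  let Q : E₂ → E₁ := fun y => g.symm (rproj η y)
  have hmem : ∀ y, rproj η y ∈ g.target := fun y => hηb (by simpa using rproj_norm hη y)
  have hQ : Continuous Q := g.continuousOn_symm.comp_continuous (rproj_cont hη) hmem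
  have hQ0 : ∀ y, Q y = 0 → y = 0 := by
    intro y hy
    apply rproj_zero hη
    have : g (Q y) = rproj η y := g.right_inv (hmem y)
    rw [← this, hy, hg]
  have hcl : closure (T.symm ⁻¹' O) = T.symm ⁻¹' closure O :=
    (T.symm.toHomeomorph.preimage_closure O).symm
  have hfro : frontier (T.symm ⁻¹' O) = T.symm ⁻¹' frontier O :=
    (T.symm.toHomeomorph.preimage_frontier O).symm
  have hcc : ∀ {H : E₁ → E₂}, ContinuousOn H (closure O) →
      ContinuousOn (fun x => T (Q (H (T.symm x)))) (closure (T.symm ⁻¹' O)) := by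
    intro H hH
    rw [hcl]
    exact (T.continuous.comp hQ).comp_continuousOn
      (hH.comp T.symm.continuous.continuousOn fun x hx => hx)
  obtain ⟨x, hx, hx0⟩ := ess_id (fun x => T (Q (F (T.symm x)))) (fun x => T (Q (F' (T.symm x))))
    (T.symm ⁻¹' O) (hO.preimage T.symm.continuous)
    (by 
      have : T.symm ⁻¹' O = T '' O := by
        ext x; constructor
        · intro h; exact ⟨T.symm x, h, by simp⟩
        · rintro ⟨y, hy, rfl⟩; simpa using hy
      rw [this]; exact T.lipschitz.isBounded_image hOb)
    (by simpa using h0) (hcc hF) (hcc hF')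
    (by intro x hx; rw [hfro] at hx; simp only [hfr _ hx])
    (by
      have h1 : Filter.Tendsto T.symm (nhds 0) (nhds 0) := by
        have := T.symm.continuous.tendsto 0
        simpa using this
      have h2 : ∀ᶠ x in nhds (0 : E₁), ‖g x‖ < η := by
        have hc : ContinuousAt g 0 := g.continuousAt hg0
        have := hc.norm
        have h3 : Filter.Tendsto (fun x => ‖g x‖) (nhds 0) (nhds 0) := by
          simpa [ContinuousAt, hg] using this
        exact h3.eventually (gt_mem_nhds hη)
      filter_upwards [h1.eventually hid, h1.eventually h2, h1.eventually (g.open_source.mem_nhds hg0)]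
        with x hx hx2 hx3
      simp only [Q]
      rw [hx, rproj_eq hη hx2.le, g.left_inv hx3]; simp)
    (by
      intro x hx h
      rw [hcl] at hx
      have h1 : Q (F (T.symm x)) = 0 := by simpa using h
      have := hz _ hx (hQ0 _ h1)
      simpa using this)
  rw [hcl] at hx
  exact ⟨T.symm x, hx, hQ0 _ (by simpa using hx0)⟩

lemma stable_zero {n : ℕ} (G : (Fin n → ℝ) → (Fin n → ℝ)) (hG : ContinuousOn G (closedBall 0 1))
    (hd : ∀ x ∈ closedBall (0 : Fin n → ℝ) 1, ‖G x - x‖ ≤ 1 / 2) :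
    ∃ x ∈ closedBall (0 : Fin n → ℝ) 1, G x = 0 := by
  have hcl : closure (ball (0 : Fin n → ℝ) 1) = closedBall 0 1 := closure_ball _ (by norm_num)
  obtain ⟨x, hx, h⟩ := ess_id (fun x => x)
    (fun x => x + (min 1 (2 * (1 - ‖x‖))) • (G x - x)) (ball 0 1) isOpen_ball isBounded_ball
    (by simp) continuousOn_id (by
      rw [hcl]
      have h1 : ContinuousOn (fun x : Fin n → ℝ => min 1 (2 * (1 - ‖x‖))) (closedBall 0 1) :=
        Continuous.continuousOn (by fun_prop)
      exact continuousOn_id.add (h1.smul (hG.sub continuousOn_id)))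
    (by
      intro x hx
      rw [frontier_ball _ (by norm_num)] at hx
      have : ‖x‖ = 1 := by simpa using hx
      simp [this]) (by simp) (by simp)
  rw [hcl] at hx
  refine ⟨x, hx, ?_⟩
  have hx1 : ‖x‖ ≤ 1 := by simpa using hx
  rcases le_or_gt ‖x‖ (1 / 2) with h1 | h1
  · rw [min_eq_left (by linarith)] at h
    simpa using h
  · exfalso
    have h2 : ‖x‖ = ‖(min 1 (2 * (1 - ‖x‖))) • (G x - x)‖ := by
      have h5 := eq_neg_of_add_eq_zero_left h
      calc ‖x‖ = ‖-((min 1 (2 * (1 - ‖x‖))) • (G x - x))‖ := congrArg norm h5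
        _ = _ := norm_neg _
    have h3 : 0 ≤ min 1 (2 * (1 - ‖x‖)) := le_min (by norm_num) (by linarith)
    have h4 : min 1 (2 * (1 - ‖x‖)) ≤ 1 := min_le_left _ _
    rw [norm_smul, Real.norm_of_nonneg h3] at h2
    have := mul_le_mul h4 (hd x hx) (norm_nonneg _) (by norm_num)
    linarith

open MeasureTheory in
lemma iod_local {n : ℕ} (g : (Fin n → ℝ) → (Fin n → ℝ)) (hg : ContinuousOn g (closedBall 0 1))
    (hi : InjOn g (closedBall 0 1)) : g '' closedBall 0 1 ∈ nhds (g 0) := by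
  by_contra hnot
  set B := closedBall (0 : Fin n → ℝ) 1 with hB
  have hBc : IsCompact B := isCompact_closedBall _ _
  have hBc' : CompactSpace B := isCompact_iff_compactSpace.1 hBc
  have hK : IsCompact (g '' B) := hBc.image_of_continuousOn hg
  have h0B : (0 : Fin n → ℝ) ∈ B := by simp [hB]
  have hemb : Topology.IsClosedEmbedding (B.restrict g) :=
    hg.restrict.isClosedEmbedding hi.injective
  obtain ⟨G, hG⟩ := ContinuousMap.exists_extension' hemb
    (⟨Subtype.val, continuous_subtype_val⟩ : C(B, Fin n → ℝ))
  have hGg : ∀ x ∈ B, G (g x) = x := fun x hx => congrFun hG ⟨x, hx⟩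
  obtain ⟨ε, hε, hεG⟩ : ∃ ε > 0, ∀ y ∈ ball (g 0) (3 * ε), ‖G y‖ < 1 / 10 := by
    have : Filter.Tendsto (fun y => ‖G y‖) (nhds (g 0)) (nhds 0) := by
      have := (G.continuous.norm).tendsto (g 0)
      simpa [hGg 0 h0B] using this
    have := this.eventually (gt_mem_nhds (show (0 : ℝ) < 1 / 10 by norm_num))
    obtain ⟨e, he, h⟩ := Metric.eventually_nhds_iff_ball.1 this
    exact ⟨e / 3, by positivity, fun y hy => h y (by convert hy using 2; ring)⟩
  obtain ⟨c, hc1, hc2⟩ : ∃ c ∈ ball (g 0) ε, c ∉ g '' B := by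
    by_contra! h
    exact hnot (Filter.mem_of_superset (ball_mem_nhds _ hε) h)
  have hc0 : dist (g 0) c < ε := by rw [dist_comm]; exact hc1
  obtain ⟨δ, hδ, hδG⟩ := (hK.diff (isOpen_ball (x := c) (ε := ε))).exists_forall_le'
    (f := fun y => ‖G y‖) (a := 0) (by fun_prop) (by
      rintro y ⟨⟨x, hx, rfl⟩, hy⟩
      rw [norm_pos_iff, hGg x hx]
      rintro rfl
      exact hy hc0)
  obtain ⟨κ, hκ, hκ1, hκ2⟩ : ∃ κ > 0, 3 * κ ≤ δ ∧ κ ≤ 1 / 10 :=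
    ⟨min (δ / 3) (1 / 10), by positivity, by linarith [min_le_left (δ / 3) (1 / 10 : ℝ)],
      min_le_right _ _⟩
  obtain ⟨P, hP, hPd, -⟩ := G.continuous.exists_contDiff_approx 1 (ε := fun _ => κ)
    continuous_const (fun _ => hκ)
  have hPnull : volume (P '' sphere c ε) = 0 :=
    addHaar_image_eq_zero_of_differentiableOn_of_addHaar_eq_zero _
      (hP.differentiable (by simp)).differentiableOn (Measure.addHaar_sphere_of_ne_zero _ _ hε.ne')
  obtain ⟨v, hv1, hv2⟩ : ∃ v ∈ ball (0 : Fin n → ℝ) κ, v ∉ P '' sphere c ε := by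
    by_contra! h
    have : volume (ball (0 : Fin n → ℝ) κ) = 0 := measure_mono_null h hPnull
    exact (measure_ball_pos volume (0 : Fin n → ℝ) hκ).ne' this
  have hv : ‖v‖ < κ := by simpa using hv1
  let Φ : (Fin n → ℝ) → (Fin n → ℝ) := fun y => c + (max (ε / ‖y - c‖) 1) • (y - c)
  have hΦ : ContinuousOn Φ (g '' B) := by
    have h1 : ContinuousOn (fun y => max (ε / ‖y - c‖) 1) (g '' B) := by
      refine ContinuousOn.sup (ContinuousOn.div continuousOn_const (continuousOn_id.sub continuousOn_const).norm ?_)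
        continuousOn_const
      intro y hy
      have : y - c ≠ 0 := by
        rw [sub_ne_zero]
        rintro rfl
        exact hc2 hy
      simpa using this
    exact continuousOn_const.add (h1.smul (continuousOn_id.sub continuousOn_const))
  have hΦ1 : ∀ y, ε ≤ dist y c → Φ y = y := by
    intro y hy
    rw [dist_eq_norm] at hy
    have : ε / ‖y - c‖ ≤ 1 := by rw [div_le_one (by linarith)]; exact hy
    simp [Φ, max_eq_right this]
  have hΦ2 : ∀ y ∈ g '' B, dist y c < ε → Φ y ∈ sphere c ε := by
    intro y hyB hy
    rw [dist_eq_norm] at hy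
    have hpos : 0 < ‖y - c‖ := by
      rw [norm_pos_iff, sub_ne_zero]
      rintro rfl
      exact hc2 hyB
    have : 1 ≤ ε / ‖y - c‖ := by rw [le_div_iff₀ hpos]; linarith
    rw [mem_sphere, dist_eq_norm]
    simp only [Φ, max_eq_left this, add_sub_cancel_left]
    rw [norm_smul, Real.norm_of_nonneg (by positivity)]
    field_simp
  have hPd' : ∀ y, ‖P y - G y‖ < κ := fun y => by simpa [dist_eq_norm] using hPd y
  obtain ⟨x, hx, hx0⟩ := stable_zero (fun x => P (Φ (g x)) - v)
    ((hP.continuous.comp_continuousOn (hΦ.comp hg (mapsTo_image g B))).sub continuousOn_const) (by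
      intro x hx
      have e1 : P (Φ (g x)) - v - x = (P (Φ (g x)) - G (Φ (g x))) - v + (G (Φ (g x)) - G (g x)) := by
        rw [hGg x hx]; abel
      have e2 : ‖P (Φ (g x)) - v - x‖ ≤ ‖P (Φ (g x)) - G (Φ (g x))‖ + ‖v‖
          + ‖G (Φ (g x)) - G (g x)‖ := by
        rw [e1]
        exact (norm_add_le _ _).trans (by gcongr; exact norm_sub_le _ _)
      have e3 : ‖G (Φ (g x)) - G (g x)‖ ≤ 2 / 10 := by
        rcases le_or_gt ε (dist (g x) c) with h | h
        · rw [hΦ1 _ h, sub_self, norm_zero]; norm_num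
        · have a1 := hεG (g x) (by
            rw [mem_ball]
            have := dist_triangle_right (g x) (g 0) c
            linarith)
          have a2 := hεG (Φ (g x)) (by
            have h2 : dist (Φ (g x)) c = ε := hΦ2 _ (mem_image_of_mem g hx) h
            rw [mem_ball]
            have := dist_triangle_right (Φ (g x)) (g 0) c
            linarith)
          have := norm_sub_le (G (Φ (g x))) (G (g x))
          linarith
      have := hPd' (Φ (g x))
      linarith)
  have hx0' : P (Φ (g x)) = v := sub_eq_zero.1 hx0
  rcases le_or_gt ε (dist (g x) c) with h | h
  · rw [hΦ1 _ h] at hx0'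
    have h1 := hδG (g x) ⟨mem_image_of_mem g hx, fun h' => absurd h' (not_lt.2 h)⟩
    have h2 := hPd' (g x)
    rw [hx0'] at h2
    have h3 : ‖G (g x)‖ ≤ ‖v‖ + ‖v - G (g x)‖ := by
      have : G (g x) = v - (v - G (g x)) := by abel
      conv_lhs => rw [this]
      exact norm_sub_le _ _
    linarith
  · exact hv2 ⟨_, hΦ2 _ (mem_image_of_mem g hx) h, hx0'⟩

lemma iod_pi {n : ℕ} (g : (Fin n → ℝ) → (Fin n → ℝ)) (U : Set (Fin n → ℝ)) (hU : IsOpen U)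
    (hg : ContinuousOn g U) (hi : InjOn g U) : IsOpen (g '' U) := by
  rw [isOpen_iff_mem_nhds]
  rintro _ ⟨x, hx, rfl⟩
  obtain ⟨r, hr, hrU⟩ := Metric.nhds_basis_closedBall.mem_iff.1 (hU.mem_nhds hx)
  have hm : MapsTo (fun z : Fin n → ℝ => x + r • z) (closedBall 0 1) U := by
    intro z hz
    apply hrU
    have : ‖z‖ ≤ 1 := by simpa using hz
    simp only [mem_closedBall, dist_self_add_left, norm_smul, Real.norm_of_nonneg hr.le]
    nlinarith
  have := iod_local (fun z => g (x + r • z)) (hg.comp (by fun_prop) hm) (by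
    intro a ha b hb h
    have := hi (hm ha) (hm hb) h
    simpa [hr.ne'] using this)
  simp only [smul_zero, add_zero] at this
  refine Filter.mem_of_superset this ?_
  rintro _ ⟨z, hz, rfl⟩
  exact ⟨_, hm hz, rfl⟩

lemma iod {E₁ E₂ : Type*} [NormedAddCommGroup E₁] [NormedSpace ℝ E₁] [FiniteDimensional ℝ E₁]
    [NormedAddCommGroup E₂] [NormedSpace ℝ E₂] [FiniteDimensional ℝ E₂]
    (hdim : Module.finrank ℝ E₁ = Module.finrank ℝ E₂)
    (g : E₁ → E₂) (U : Set E₁) (hU : IsOpen U)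
    (hg : ContinuousOn g U) (hi : InjOn g U) : IsOpen (g '' U) := by
  let n := Module.finrank ℝ E₁
  let T : E₁ ≃L[ℝ] (Fin n → ℝ) := ContinuousLinearEquiv.ofFinrankEq (by simp [n])
  let S : E₂ ≃L[ℝ] (Fin n → ℝ) := ContinuousLinearEquiv.ofFinrankEq (by simp [n, hdim])
  have h := iod_pi (fun x => S (g (T.symm x))) (T.symm ⁻¹' U) (hU.preimage T.symm.continuous)
    (S.continuous.comp_continuousOn (hg.comp T.symm.continuous.continuousOn fun x hx => hx))
    (by
      intro a ha b hb hab
      exact T.symm.injective (hi ha hb (S.injective hab)))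
  have h2 := h.preimage S.continuous
  convert h2 using 1
  ext y
  constructor
  · rintro ⟨x, hx, rfl⟩
    exact ⟨T x, by simpa using hx, by simp⟩
  · rintro ⟨x, hx, h⟩
    exact ⟨T.symm x, hx, S.injective h⟩

lemma iod_lt {E₁ E₂ : Type*} [NormedAddCommGroup E₁] [NormedSpace ℝ E₁] [FiniteDimensional ℝ E₁]
    [NormedAddCommGroup E₂] [NormedSpace ℝ E₂] [FiniteDimensional ℝ E₂]
    (hdim : Module.finrank ℝ E₂ < Module.finrank ℝ E₁)
    (g : E₁ → E₂) (U : Set E₁) (hU : IsOpen U) (hne : U.Nonempty)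
    (hg : ContinuousOn g U) (hi : InjOn g U) : False := by
  obtain ⟨d, hd⟩ : ∃ d, Module.finrank ℝ E₁ = Module.finrank ℝ E₂ + (d + 1) :=
    ⟨Module.finrank ℝ E₁ - Module.finrank ℝ E₂ - 1, by omega⟩
  have h := iod (E₂ := E₂ × (Fin (d + 1) → ℝ)) (by simp [hd]) (fun x => (g x, 0)) U hU
    (hg.prodMk continuousOn_const) (fun a ha b hb hab => hi ha hb (Prod.ext_iff.1 hab).1)
  obtain ⟨x, hx⟩ := hne
  have h2 := h.preimage (f := fun t : ℝ => (g x, fun _ : Fin (d + 1) => t)) (by fun_prop)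
  have h3 : (fun t : ℝ => (g x, fun _ : Fin (d + 1) => t)) ⁻¹' ((fun x => (g x, 0)) '' U)
      = {0} := by
    ext t
    constructor
    · rintro ⟨y, _, hy⟩
      exact (congrFun (Prod.ext_iff.1 hy).2 0).symm
    · rintro rfl
      exact ⟨x, hx, rfl⟩
  rw [h3] at h2
  exact not_isOpen_singleton _ h2


lemma iterZ_zero (f : M ≃ₜ M) (x : M) : iterZ f 0 x = x := by simp [iterZ]

lemma iterZ_add (f : M ≃ₜ M) (a b : ℤ) (x : M) : iterZ f (a + b) x = iterZ f a (iterZ f b x) := by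
  simp [iterZ, zpow_add]

lemma iterZ_one (f : M ≃ₜ M) (x : M) : iterZ f 1 x = f x := by simp [iterZ]

lemma iterZ_symm (f : M ≃ₜ M) (k : ℤ) (x : M) : iterZ f.symm k x = iterZ f (-k) x := by
  have : f.symm.toEquiv = f.toEquiv⁻¹ := rfl
  simp [iterZ, this]

lemma iterZ_neg_one (f : M ≃ₜ M) (x : M) : iterZ f (-1) x = f.symm x := by
  rw [← iterZ_symm, iterZ_one]

lemma iterZ_cont (f : M ≃ₜ M) (k : ℤ) : Continuous (iterZ f k) := by
  induction k using Int.induction_on with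
  | zero =>
    have : iterZ f 0 = id := funext fun x => iterZ_zero f x
    rw [this]; exact continuous_id
  | succ k ih =>
    have : iterZ f (k + 1) = fun x => iterZ f k (f x) :=
      funext fun x => by rw [iterZ_add, iterZ_one]
    rw [this]; exact ih.comp f.continuous
  | pred k ih =>
    have : iterZ f (-k - 1) = fun x => iterZ f (-k) (f.symm x) :=
      funext fun x => by rw [sub_eq_add_neg, iterZ_add, iterZ_neg_one]
    rw [this]; exact ih.comp f.symm.continuous

lemma iterZ_inj (f : M ≃ₜ M) (k : ℤ) : Function.Injective (iterZ f k) := by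
  intro x y h
  have := congrArg (iterZ f (-k)) h
  simpa [← iterZ_add, iterZ_zero] using this

lemma iterZ_neg_self (f : M ≃ₜ M) (k : ℤ) (x : M) : iterZ f (-k) (iterZ f k x) = x := by
  rw [← iterZ_add]; simp [iterZ_zero]

lemma iterZ_self_neg (f : M ≃ₜ M) (k : ℤ) (x : M) : iterZ f k (iterZ f (-k) x) = x := by
  rw [← iterZ_add]; simp [iterZ_zero]

lemma symm_symm' (f : M ≃ₜ M) : f.symm.symm = f := rfl

lemma WsLoc_symm (f : M ≃ₜ M) (ε : ℝ) (x : M) : WsLoc f.symm ε x = WuLoc f ε x := by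
  ext y
  simp only [WsLoc, WuLoc, mem_setOf_eq, iterZ_symm]
  constructor
  · intro h k hk; simpa using h (-k) (by omega)
  · intro h k hk; exact h (-k) (by omega)

lemma WuLoc_symm (f : M ≃ₜ M) (ε : ℝ) (x : M) : WuLoc f.symm ε x = WsLoc f ε x := by
  rw [← WsLoc_symm]; rfl

lemma IsExpansive.symm {f : M ≃ₜ M} {α : ℝ} (h : IsExpansive f α) : IsExpansive f.symm α := by
  intro x y hxy
  obtain ⟨k, hk⟩ := h x y hxy
  exact ⟨-k, by simpa [iterZ_symm] using hk⟩

lemma WsLoc_mono {f : M ≃ₜ M} {ε ε' : ℝ} (h : ε ≤ ε') {x y : M} (hy : y ∈ WsLoc f ε x) :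
    y ∈ WsLoc f ε' x := fun k hk => (hy k hk).trans h

lemma WsLoc_comm {f : M ≃ₜ M} {ε : ℝ} {x y : M} (hy : y ∈ WsLoc f ε x) :
    x ∈ WsLoc f ε y := fun k hk => by rw [dist_comm]; exact hy k hk

lemma WsLoc_trans {f : M ≃ₜ M} {ε ε' : ℝ} {x y z : M} (hy : y ∈ WsLoc f ε x)
    (hz : z ∈ WsLoc f ε' y) : z ∈ WsLoc f (ε + ε') x :=
  fun k hk => (dist_triangle _ _ _).trans (add_le_add (hy k hk) (hz k hk))

lemma WuLoc_mono {f : M ≃ₜ M} {ε ε' : ℝ} (h : ε ≤ ε') {x y : M} (hy : y ∈ WuLoc f ε x) :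
    y ∈ WuLoc f ε' x := fun k hk => (hy k hk).trans h

lemma WuLoc_comm {f : M ≃ₜ M} {ε : ℝ} {x y : M} (hy : y ∈ WuLoc f ε x) :
    x ∈ WuLoc f ε y := fun k hk => by rw [dist_comm]; exact hy k hk

lemma WuLoc_trans {f : M ≃ₜ M} {ε ε' : ℝ} {x y z : M} (hy : y ∈ WuLoc f ε x)
    (hz : z ∈ WuLoc f ε' y) : z ∈ WuLoc f (ε + ε') x :=
  fun k hk => (dist_triangle _ _ _).trans (add_le_add (hy k hk) (hz k hk))

lemma eq_of_Ws_Wu {f : M ≃ₜ M} {α : ℝ} (hexp : IsExpansive f α) {x y : M}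
    (hs : y ∈ WsLoc f α x) (hu : y ∈ WuLoc f α x) : x = y := by
  by_contra h
  obtain ⟨k, hk⟩ := hexp x y h
  rcases le_total 0 k with h0 | h0
  · exact absurd (hs k h0) (not_le.2 hk)
  · exact absurd (hu k h0) (not_le.2 hk)

lemma isClosed_WsRel (f : M ≃ₜ M) (ε : ℝ) : IsClosed {z : M × M | z.2 ∈ WsLoc f ε z.1} := by
  have : {z : M × M | z.2 ∈ WsLoc f ε z.1} =
      ⋂ (k : ℤ) (_ : 0 ≤ k), {z : M × M | dist (iterZ f k z.1) (iterZ f k z.2) ≤ ε} := by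
    ext z; simp [WsLoc]
  rw [this]
  refine isClosed_iInter fun k => isClosed_iInter fun _ => isClosed_le ?_ continuous_const
  exact ((iterZ_cont f k).comp continuous_fst).dist ((iterZ_cont f k).comp continuous_snd)

lemma gap [CompactSpace M] {f : M ≃ₜ M} {α ε : ℝ} (hexp : IsExpansive f α) (hε : 0 < ε)
    (hεα : ε ≤ α) : ∃ δ > 0, ∀ x y : M, dist x y ≤ δ → y ∈ WsLoc f ε x →
      ∀ k : ℤ, 0 ≤ k → dist (iterZ f k x) (iterZ f k y) < ε := by
  by_contra! hcon
  have hcon' : ∀ j : ℕ, ∃ z : M × M, ∃ k : ℤ, dist z.1 z.2 ≤ 1 / ((j : ℝ) + 1) ∧ z.2 ∈ WsLoc f ε z.1 ∧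
      0 ≤ k ∧ ε ≤ dist (iterZ f k z.1) (iterZ f k z.2) := by
    intro j
    obtain ⟨x, y, h1, h2, k, h3, h4⟩ := hcon (1 / ((j : ℝ) + 1)) (by positivity)
    exact ⟨(x, y), k, h1, h2, h3, h4⟩
  choose z k hz1 hz2 hk0 hk using hcon'
  let w : ℕ → M × M := fun j => (iterZ f (k j) (z j).1, iterZ f (k j) (z j).2)
  obtain ⟨⟨a, b⟩, -, φ, hφ, hlim⟩ := isCompact_univ.tendsto_subseq (x := w) (fun _ => mem_univ _)
  obtain ⟨⟨c, d⟩, -, θ, hθ, hlim2⟩ := isCompact_univ.tendsto_subseq (x := z ∘ φ) (fun _ => mem_univ _)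
  have hlim' : Filter.Tendsto (fun j => w (φ (θ j))) Filter.atTop (nhds (a, b)) :=
    hlim.comp hθ.tendsto_atTop
  have hmono : StrictMono (fun j => φ (θ j)) := hφ.comp hθ
  have hcd : c = d := by
    have h1 : Filter.Tendsto (fun j => dist (z (φ (θ j))).1 (z (φ (θ j))).2) Filter.atTop
        (nhds (dist c d)) := by
      have h : Continuous (fun z : M × M => dist z.1 z.2) := by fun_prop
      exact (h.tendsto (c, d)).comp hlim2
    have h2 : Filter.Tendsto (fun j => dist (z (φ (θ j))).1 (z (φ (θ j))).2) Filter.atTop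
        (nhds 0) :=
      squeeze_zero (fun _ => dist_nonneg) (fun j => hz1 _)
        (tendsto_one_div_add_atTop_nhds_zero_nat.comp hmono.tendsto_atTop)
    exact dist_eq_zero.1 (tendsto_nhds_unique h1 h2)
  subst hcd
  have hktop : ∀ N : ℤ, ∀ᶠ j in Filter.atTop, N < k (φ (θ j)) := by
    intro N
    -- on 0 ≤ i ≤ N the distances tend to zero
    have h1 : ∀ i ∈ Finset.Icc (0 : ℤ) N, ∀ᶠ j in Filter.atTop,
        dist (iterZ f i (z (φ (θ j))).1) (iterZ f i (z (φ (θ j))).2) < ε := by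
      intro i _
      have h : Continuous (fun z : M × M => dist (iterZ f i z.1) (iterZ f i z.2)) :=
        ((iterZ_cont f i).comp continuous_fst).dist ((iterZ_cont f i).comp continuous_snd)
      have := (h.tendsto (c, c)).comp hlim2
      simp only [dist_self] at this
      exact this.eventually (gt_mem_nhds hε)
    have h2 := (Filter.eventually_all_finset _).2 h1
    filter_upwards [h2] with j hj
    by_contra! hle
    exact absurd (hj _ (Finset.mem_Icc.2 ⟨hk0 _, hle⟩)) (not_lt.2 (hk _))
  have hab : a = b := by
    by_contra hne
    obtain ⟨i, hi⟩ := hexp a b hne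
    have h : Continuous (fun z : M × M => dist (iterZ f i z.1) (iterZ f i z.2)) :=
      ((iterZ_cont f i).comp continuous_fst).dist ((iterZ_cont f i).comp continuous_snd)
    have h1 := (h.tendsto (a, b)).comp hlim'
    have h2 : dist (iterZ f i a) (iterZ f i b) ≤ ε := by
      refine le_of_tendsto h1 ?_
      filter_upwards [hktop (-i)] with j hj
      have := hz2 (φ (θ j)) (i + k (φ (θ j))) (by omega)
      simpa [w, iterZ_add] using this
    linarith
  have h : Continuous (fun z : M × M => dist z.1 z.2) := by fun_prop
  have h1 := (h.tendsto (a, b)).comp hlim'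
  have h2 : ε ≤ dist a b := ge_of_tendsto h1 (Filter.Eventually.of_forall fun j => hk _)
  rw [hab, dist_self] at h2
  linarith


/-- A hyperbolic chart at a periodic point. -/
structure HypChart (f : M ≃ₜ M) (p : M) (Es Eu : Type*) [NormedAddCommGroup Es] [NormedSpace ℝ Es]
    [NormedAddCommGroup Eu] [NormedSpace ℝ Eu] where
  l : ℕ
  hl : 1 ≤ l
  e : OpenPartialHomeomorph (Es × Eu) M
  hsrc : closedBall (0 : Es × Eu) 1 ⊆ e.source
  e0 : e 0 = p
  conj1 : ∀ (a : Es) (b : Eu), ‖a‖ ≤ 1 → ‖b‖ ≤ 1 / 2 →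
    iterZ f l (e (a, b)) = e ((1 / 2 : ℝ) • a, (2 : ℝ) • b)
  conj2 : ∀ (a a' : Es) (b b' : Eu), ‖a‖ ≤ 1 → ‖b‖ ≤ 1 → ‖a'‖ ≤ 1 → ‖b'‖ ≤ 1 →
    iterZ f l (e (a, b)) = e (a', b') → a' = (1 / 2 : ℝ) • a ∧ b' = (2 : ℝ) • b

section hc
variable {Es Eu : Type*} [NormedAddCommGroup Es] [NormedSpace ℝ Es]
    [NormedAddCommGroup Eu] [NormedSpace ℝ Eu] {f : M ≃ₜ M} {p : M}

/-- The chart for the inverse map. -/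
noncomputable def HypChart.symm (C : HypChart f p Es Eu) : HypChart f.symm p Eu Es where
  l := C.l
  hl := C.hl
  e := (Homeomorph.prodComm Eu Es).toOpenPartialHomeomorph.trans C.e
  hsrc := by
    intro z hz
    have h : z.swap ∈ closedBall (0 : Es × Eu) 1 := by
      simp only [mem_closedBall, dist_zero_right, Prod.norm_def, Prod.fst_swap, Prod.snd_swap] at hz ⊢
      rwa [max_comm]
    have := C.hsrc h
    simpa using this
  e0 := by
    exact C.e0
  conj1 := by
    intro b a hb ha
    have h := C.conj1 ((2 : ℝ) • a) ((1 / 2 : ℝ) • b)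
      (by rw [norm_smul]; norm_num; linarith) (by rw [norm_smul]; norm_num; linarith)
    rw [smul_smul, smul_smul] at h
    norm_num at h
    have h2 := iterZ_neg_self f C.l (C.e ((2 : ℝ) • a, (1 / 2 : ℝ) • b))
    norm_num at h2
    rw [h] at h2
    rw [iterZ_symm]
    simpa using h2
  conj2 := by
    intro b b' a a' hb ha hb' ha' h
    have h1 : iterZ f (-C.l) (C.e (a, b)) = C.e (a', b') := by
      rw [iterZ_symm] at h
      simpa using h
    have h2 := C.conj2 a' a b' b ha' hb' ha hb (by rw [← h1, iterZ_self_neg])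
    constructor
    · rw [h2.2, smul_smul]; norm_num
    · rw [h2.1, smul_smul]; norm_num

lemma HypChart.symm_e (C : HypChart f p Es Eu) (b : Eu) (a : Es) : C.symm.e (b, a) = C.e (a, b) := rfl

lemma HypChart.mem_source (C : HypChart f p Es Eu) {a : Es} {b : Eu} (ha : ‖a‖ ≤ 1) (hb : ‖b‖ ≤ 1) :
    (a, b) ∈ C.e.source := C.hsrc (by simp [Prod.norm_def, ha, hb])

lemma HypChart.injOn (C : HypChart f p Es Eu) {a a' : Es} {b b' : Eu} (ha : ‖a‖ ≤ 1) (hb : ‖b‖ ≤ 1)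
    (ha' : ‖a'‖ ≤ 1) (hb' : ‖b'‖ ≤ 1) (h : C.e (a, b) = C.e (a', b')) : a = a' ∧ b = b' := by
  have := C.e.injOn (C.mem_source ha hb) (C.mem_source ha' hb') h
  exact Prod.ext_iff.1 this

lemma HypChart.per (C : HypChart f p Es Eu) : iterZ f C.l p = p := by
  have := C.conj1 0 0 (by simp) (by simp)
  simp only [smul_zero] at this
  have h0 : ((0 : Es), (0 : Eu)) = 0 := rfl
  rwa [h0, C.e0] at this

lemma HypChart.per_mul (C : HypChart f p Es Eu) (m : ℕ) : iterZ f (C.l * m) p = p := by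
  induction m with
  | zero => simp [iterZ_zero]
  | succ m ih => rw [Nat.cast_succ, mul_add, mul_one, iterZ_add, C.per, ih]

lemma HypChart.conj_iter (C : HypChart f p Es Eu) (a : Es) (ha : ‖a‖ ≤ 1) (m : ℕ) :
    iterZ f (C.l * m) (C.e (a, 0)) = C.e ((1 / 2 : ℝ) ^ m • a, 0) := by
  induction m with
  | zero => simp [iterZ_zero]
  | succ m ih =>
    rw [Nat.cast_succ, mul_add, mul_one, add_comm, iterZ_add, ih, C.conj1]
    · rw [smul_smul, smul_zero, pow_succ']
    · rw [norm_smul, norm_pow]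
      norm_num
      have : ((1 : ℝ) / 2) ^ m ≤ 1 := pow_le_one₀ (by norm_num) (by norm_num)
      have h0 : 0 ≤ ((1 : ℝ) / 2) ^ m := by positivity
      calc _ = ((1 : ℝ) / 2) ^ m * ‖a‖ := by norm_num
        _ ≤ 1 := by nlinarith [norm_nonneg a]
    · simp

lemma HypChart.exA (C : HypChart f p Es Eu) : ∃ ε₀ > 0, ∀ y ∈ WsLoc f ε₀ p,
    ∃ a : Es, ‖a‖ ≤ 1 ∧ y = C.e (a, 0) := by
  have h0s : (0 : Es × Eu) ∈ C.e.source := C.hsrc (by simp)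
  have hn : C.e '' closedBall 0 1 ∈ nhds p := by
    have := C.e.image_mem_nhds h0s (closedBall_mem_nhds _ one_pos)
    rwa [C.e0] at this
  obtain ⟨ε₀, hε₀, hb⟩ := Metric.nhds_basis_closedBall.mem_iff.1 hn
  refine ⟨ε₀, hε₀, fun y hy => ?_⟩
  have hz : ∀ m : ℕ, ∃ z ∈ closedBall (0 : Es × Eu) 1, C.e z = iterZ f (C.l * m) y := by
    intro m
    have := hy (C.l * m) (by positivity)
    rw [C.per_mul, dist_comm] at this
    exact hb this
  choose z hz hez using hz
  have hz1 : ∀ m, ‖(z m).1‖ ≤ 1 := fun m => (norm_fst_le (z m)).trans (by simpa using hz m)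
  have hz2 : ∀ m, ‖(z m).2‖ ≤ 1 := fun m => (norm_snd_le (z m)).trans (by simpa using hz m)
  have hrec : ∀ m, (z (m + 1)).2 = (2 : ℝ) • (z m).2 := by
    intro m
    refine (C.conj2 (z m).1 (z (m + 1)).1 (z m).2 (z (m + 1)).2 (hz1 _) (hz2 _) (hz1 _) (hz2 _) ?_).2
    change iterZ f C.l (C.e (z m)) = C.e (z (m + 1))
    rw [hez, hez, ← iterZ_add, Nat.cast_succ, mul_add, mul_one, add_comm]
  have hpow : ∀ m, (z m).2 = (2 : ℝ) ^ m • (z 0).2 := by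
    intro m
    induction m with
    | zero => simp
    | succ m ih => rw [hrec, ih, smul_smul, pow_succ']
  have hb0 : (z 0).2 = 0 := by
    by_contra hne
    have hpos : 0 < ‖(z 0).2‖ := norm_pos_iff.2 hne
    obtain ⟨m, hm⟩ := pow_unbounded_of_one_lt (1 / ‖(z 0).2‖) (one_lt_two (α := ℝ))
    have := hz2 m
    rw [hpow, norm_smul, norm_pow, Real.norm_of_nonneg (by norm_num : (0 : ℝ) ≤ 2)] at this
    rw [div_lt_iff₀ hpos] at hm
    linarith
  refine ⟨(z 0).1, hz1 0, ?_⟩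
  rw [← hb0]
  have := hez 0
  simp only [Nat.cast_zero, mul_zero, iterZ_zero] at this
  exact this.symm

lemma HypChart.exB (C : HypChart f p Es Eu) {ε : ℝ} (hε : 0 < ε) : ∃ ρ₀ > 0, ρ₀ ≤ 1 ∧
    ∀ a : Es, ‖a‖ ≤ ρ₀ → C.e (a, 0) ∈ WsLoc f ε p := by
  have h0s : (0 : Es × Eu) ∈ C.e.source := C.hsrc (by simp)
  have hlim : Filter.Tendsto (fun a : Es => C.e (a, 0)) (nhds 0) (nhds p) := by
    have h1 : ContinuousAt C.e ((0 : Es), (0 : Eu)) := C.e.continuousAt h0s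
    have h2 : ContinuousAt (fun a : Es => C.e (a, 0)) 0 :=
      ContinuousAt.comp (f := fun a : Es => (a, (0 : Eu))) h1 (by fun_prop)
    have h3 := h2.tendsto
    have h0 : ((0 : Es), (0 : Eu)) = 0 := rfl
    rwa [h0, C.e0] at h3
  have hev : ∀ i ∈ Finset.range C.l, ∀ᶠ a : Es in nhds 0,
      dist (iterZ f i p) (iterZ f i (C.e (a, 0))) < ε := by
    intro i _
    have hc : Continuous fun y => dist (iterZ f i p) (iterZ f i y) :=
      continuous_const.dist (iterZ_cont f i)
    have := (hc.tendsto p).comp hlim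
    simp only [dist_self] at this
    exact this.eventually (gt_mem_nhds hε)
  have hev2 := (Filter.eventually_all_finset _).2 hev
  obtain ⟨r, hr, hrb⟩ := Metric.nhds_basis_closedBall.mem_iff.1 hev2
  refine ⟨min r 1, by positivity, min_le_right _ _, fun a ha k hk => ?_⟩
  have ha1 : ‖a‖ ≤ 1 := ha.trans (min_le_right _ _)
  obtain ⟨K, rfl⟩ := Int.eq_ofNat_of_zero_le hk
  have hdm := Nat.div_add_mod K C.l
  have hK : (K : ℤ) = ((K % C.l : ℕ) : ℤ) + C.l * ((K / C.l : ℕ) : ℤ) := by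
    rw [add_comm]; exact_mod_cast hdm.symm
  rw [hK, iterZ_add, iterZ_add, C.per_mul, C.conj_iter a ha1]
  have hmem : (1 / 2 : ℝ) ^ (K / C.l) • a ∈ closedBall (0 : Es) r := by
    rw [mem_closedBall, dist_zero_right, norm_smul, norm_pow]
    have : (‖(1 / 2 : ℝ)‖) ^ (K / C.l) ≤ 1 := pow_le_one₀ (by norm_num) (by norm_num)
    have h0 : 0 ≤ (‖(1 / 2 : ℝ)‖) ^ (K / C.l) := by positivity
    have := ha.trans (min_le_left _ _)
    nlinarith [norm_nonneg a]
  exact (hrb hmem _ (Finset.mem_range.2 (Nat.mod_lt _ C.hl))).le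

lemma HypChart.global (C : HypChart f p Es Eu) : ∃ φ : Es → M, Continuous φ ∧
    Function.Injective φ ∧ φ 0 = p ∧ (∀ x, ‖x‖ ≤ 1 → φ x = C.e (x, 0)) ∧
    (∀ x, ∀ m : ℕ, iterZ f (C.l * m) (φ x) = φ ((1 / 2 : ℝ) ^ m • x)) := by
  have hex : ∀ x : Es, ∃ m : ℕ, ‖x‖ ≤ 2 ^ m := fun x => by
    obtain ⟨m, hm⟩ := pow_unbounded_of_one_lt ‖x‖ (one_lt_two (α := ℝ))
    exact ⟨m, hm.le⟩
  choose μ hμ using hex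
  have hnorm : ∀ (x : Es) (m : ℕ), ‖(1 / 2 : ℝ) ^ m • x‖ = ‖x‖ / 2 ^ m := by
    intro x m
    rw [norm_smul, norm_pow, Real.norm_of_nonneg (by norm_num), one_div, inv_pow, inv_mul_eq_div]
  have hle : ∀ (x : Es) (m : ℕ), ‖x‖ ≤ 2 ^ m → ‖(1 / 2 : ℝ) ^ m • x‖ ≤ 1 := by
    intro x m h
    rw [hnorm, div_le_one (by positivity)]; exact h
  let g : ℕ → Es → M := fun m x => iterZ f (-(C.l * m)) (C.e ((1 / 2 : ℝ) ^ m • x, 0))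
  have hg : ∀ m j x, ‖x‖ ≤ 2 ^ m → g (m + j) x = g m x := by
    intro m j x hx
    have h1 := C.conj_iter _ (hle x m hx) j
    rw [smul_smul, ← pow_add, add_comm j m] at h1
    simp only [g]
    rw [← h1, ← iterZ_add]
    congr 1
    push_cast; ring
  have hg2 : ∀ m m' x, ‖x‖ ≤ 2 ^ m → ‖x‖ ≤ 2 ^ m' → g m x = g m' x := by
    intro m m' x h h'
    rw [← hg m m' x h, ← hg m' m x h', add_comm]
  have hφ : ∀ m x, ‖x‖ ≤ 2 ^ m → g (μ x) x = g m x := fun m x h => hg2 _ _ _ (hμ x) h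
  refine ⟨fun x => g (μ x) x, ?_, ?_, ?_, ?_, ?_⟩
  · rw [continuous_iff_continuousAt]
    intro x
    obtain ⟨m, hm⟩ := pow_unbounded_of_one_lt ‖x‖ (one_lt_two (α := ℝ))
    have hev : ∀ᶠ y in nhds x, ‖y‖ < 2 ^ m := continuous_norm.continuousAt.eventually (gt_mem_nhds hm)
    have hc : ContinuousAt (g m) x := by
      refine (iterZ_cont f _).continuousAt.comp ?_
      have h1 : ContinuousAt C.e ((1 / 2 : ℝ) ^ m • x, (0 : Eu)) :=
        C.e.continuousAt (C.mem_source (hle x m hm.le) (by simp))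
      exact ContinuousAt.comp (f := fun x : Es => ((1 / 2 : ℝ) ^ m • x, (0 : Eu))) h1 (by fun_prop)
    refine hc.congr ?_
    filter_upwards [hev] with y hy
    exact (hφ m y hy.le).symm
  · intro x y hxy
    simp only at hxy
    have hm1 : ‖x‖ ≤ 2 ^ (μ x + μ y) :=
      (hμ x).trans (pow_le_pow_right₀ (by norm_num) (by omega))
    have hm2 : ‖y‖ ≤ 2 ^ (μ x + μ y) :=
      (hμ y).trans (pow_le_pow_right₀ (by norm_num) (by omega))
    rw [hφ _ x hm1, hφ _ y hm2] at hxy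
    have h1 := iterZ_inj f _ hxy
    have h2 := (C.injOn (hle x _ hm1) (by simp) (hle y _ hm2) (by simp) h1).1
    exact smul_right_injective Es (by positivity) h2
  · have := hφ 0 0 (by simp)
    simp only [this, g]
    have h0 : ((0 : Es), (0 : Eu)) = 0 := rfl
    simp [iterZ_zero, h0, C.e0]
  · intro x hx
    have := hφ 0 x (by simpa using hx)
    simp only [this, g]
    simp [iterZ_zero]
  · intro x m
    have h1 : ‖x‖ ≤ 2 ^ (m + μ x) := (hμ x).trans (pow_le_pow_right₀ (by norm_num) (by omega))
    have h2 : ‖(1 / 2 : ℝ) ^ m • x‖ ≤ 2 ^ μ x := by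
      rw [hnorm, div_le_iff₀ (by positivity), ← pow_add, add_comm]; exact h1
    have e1 := hφ _ x h1
    have e2 := hφ _ _ h2
    simp only [e1, e2, g]
    rw [← iterZ_add, smul_smul, ← pow_add, add_comm (μ x) m]
    congr 1
    push_cast; ring

end hc


lemma exists_chart {f : M ≃ₜ M} {n r : ℕ} {p : M} (hp : p ∈ PerHr f n r) :
    Nonempty (HypChart f p (Fin r → ℝ) (Fin (n - r) → ℝ)) := by
  obtain ⟨l, hl, hper, U, V, h, hU, hV, h0V, hpU, hp0, hconj⟩ := hp
  have : Nonempty V := ⟨⟨0, h0V⟩⟩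
  have hfl : ∀ x, (f.toEquiv ^ l) x = iterZ f l x := fun x => by simp [iterZ]
  have hE : Topology.IsOpenEmbedding (fun v : V => ((h.symm v : U) : M)) :=
    hU.isOpenEmbedding_subtypeVal.comp h.symm.isOpenEmbedding
  let A := (hV.isOpenEmbedding_subtypeVal).toOpenPartialHomeomorph (Subtype.val : V → ModelSp n r)
  let B := hE.toOpenPartialHomeomorph _
  let e := A.symm.trans B
  have hA : ∀ z (hz : z ∈ V), A.symm z = ⟨z, hz⟩ := by
    intro z hz
    have := A.left_inv (x := ⟨z, hz⟩) (by simp [A])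
    simpa [A] using this
  have hes : V ⊆ e.source := by
    intro z hz
    simp [e, A, B, hz]
  have hez : ∀ z (hz : z ∈ V), e z = (h.symm ⟨z, hz⟩ : U) := by
    intro z hz
    change B (A.symm z) = _
    rw [hA z hz]
    rfl
  have hez2 : ∀ z (hz : z ∈ V), iterZ f l (e z) ∈ U → ∃ hz' : modelL n r z ∈ V,
      iterZ f l (e z) = e (modelL n r z) := by
    intro z hz hzU
    have h1 : e z ∈ U := by rw [hez z hz]; exact Subtype.coe_prop _
    have h2 := hconj (e z) h1 (by rwa [hfl])
    have h3 : h ⟨e z, h1⟩ = ⟨z, hz⟩ := by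
      have : (⟨e z, h1⟩ : U) = h.symm ⟨z, hz⟩ := Subtype.ext (hez z hz)
      rw [this, h.apply_symm_apply]
    rw [h3] at h2
    simp only [hfl] at h2
    have h4 : modelL n r z ∈ V := by rw [← h2]; exact Subtype.coe_prop _
    refine ⟨h4, ?_⟩
    rw [hez _ h4]
    have h5 : (⟨modelL n r z, h4⟩ : V) = h ⟨iterZ f l (e z), hzU⟩ := Subtype.ext h2.symm
    rw [h5, h.symm_apply_apply]
  have he0 : e 0 = p := by
    rw [hez 0 h0V]
    have : (⟨0, h0V⟩ : V) = h ⟨p, hpU⟩ := Subtype.ext hp0.symm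
    rw [this, h.symm_apply_apply]
  have hmodel : ∀ a b, modelL n r (a, b) = ((1 / 2 : ℝ) • a, (2 : ℝ) • b) := by
    intro a b
    refine Prod.ext ?_ ?_
    · funext i; simp [modelL]; ring
    · funext i; simp [modelL]
  have hev : ∀ᶠ z in nhds (0 : ModelSp n r), iterZ f l (e z) ∈ U := by
    have hc : ContinuousAt (fun z => iterZ f l (e z)) 0 :=
      (iterZ_cont f l).continuousAt.comp (e.continuousAt (hes h0V))
    have : iterZ f l (e 0) = p := by rw [he0, ← hfl, hper]
    exact hc.preimage_mem_nhds (by rw [this]; exact hU.mem_nhds hpU)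
  obtain ⟨ρ, hρ, hρb⟩ := Metric.nhds_basis_closedBall.mem_iff.1
    (Filter.inter_mem hev (hV.mem_nhds h0V))
  have hmem : ∀ a : Fin r → ℝ, ∀ b : Fin (n - r) → ℝ, ‖a‖ ≤ 1 → ‖b‖ ≤ 1 →
      ρ • (a, b) ∈ closedBall (0 : ModelSp n r) ρ := by
    intro a b ha hb
    rw [mem_closedBall, dist_zero_right, norm_smul, Real.norm_of_nonneg hρ.le]
    have : ‖(a, b)‖ ≤ 1 := by simp [Prod.norm_def, ha, hb]
    nlinarith
  let S : OpenPartialHomeomorph (ModelSp n r) (ModelSp n r) :=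
    (Homeomorph.smulOfNeZero ρ hρ.ne').toOpenPartialHomeomorph
  have hS : ∀ z, (S.trans e) z = e (ρ • z) := fun z => rfl
  refine ⟨⟨l, hl, S.trans e, ?_, ?_, ?_, ?_⟩⟩
  · rintro ⟨a, b⟩ hz
    have hz' : ‖a‖ ≤ 1 ∧ ‖b‖ ≤ 1 := by simpa [Prod.norm_def] using hz
    have := hes (hρb (hmem a b hz'.1 hz'.2)).2
    simpa [S] using this
  · rw [hS, smul_zero, he0]
  · intro a b ha hb
    have h1 := hρb (hmem a b ha (hb.trans (by norm_num)))
    obtain ⟨-, h2⟩ := hez2 _ h1.2 h1.1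
    rw [hS, hS, h2]
    congr 1
    rw [Prod.smul_mk, hmodel, Prod.smul_mk, smul_comm, smul_comm (2 : ℝ)]
  · intro a a' b b' ha hb ha' hb' heq
    have h1 := hρb (hmem a b ha hb)
    have h1' := hρb (hmem a' b' ha' hb')
    obtain ⟨h3, h2⟩ := hez2 _ h1.2 h1.1
    rw [hS, hS, h2] at heq
    have h4 := e.injOn (hes h3) (hes h1'.2) heq
    rw [Prod.smul_mk, hmodel, Prod.smul_mk, smul_comm, smul_comm (2 : ℝ)] at h4
    obtain ⟨h5, h6⟩ := Prod.ext_iff.1 h4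
    exact ⟨(smul_right_injective _ hρ.ne' h5).symm, (smul_right_injective _ hρ.ne' h6).symm⟩

/-- local leaves -/
lemma local_leaf [CompactSpace M] {Es Eu Es' Eu' : Type*} [NormedAddCommGroup Es] [NormedSpace ℝ Es]
    [NormedAddCommGroup Eu] [NormedSpace ℝ Eu] [NormedAddCommGroup Es'] [NormedSpace ℝ Es']
    [NormedAddCommGroup Eu'] [NormedSpace ℝ Eu'] [FiniteDimensional ℝ Es'] 
    [FiniteDimensional ℝ Es] [FiniteDimensional ℝ Eu]
    {f : M ≃ₜ M} {α ε δ ρ : ℝ} {p q : M} (hexp : IsExpansive f α) (hε : 0 < ε) (hεα : ε ≤ α)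
    (hδ : ∀ x y : M, dist x y ≤ δ → y ∈ WsLoc f ε x →
      ∀ k : ℤ, 0 ≤ k → dist (iterZ f k x) (iterZ f k y) < ε)
    (C : HypChart f p Es Eu) (hρ : 0 < ρ) (hρ1 : ρ ≤ 1)
    (hρδ : ∀ z ∈ closedBall (0 : Es × Eu) ρ, dist (C.e z) p ≤ δ / 2)
    (hq : q ∈ C.e '' ball 0 ρ)
    (hsc : ∀ z ∈ closedBall (0 : Es × Eu) ρ, C.e z ∈ WsLoc f ε q → ‖z.2‖ < ρ / 2)
    (D : HypChart f q Es' Eu') :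
    ∃ (φ : Es' → M) (O : Set Es'), Continuous φ ∧ Function.Injective φ ∧ φ 0 = q ∧
      (∀ x, ‖x‖ ≤ 1 → φ x = D.e (x, 0)) ∧ IsOpen O ∧ Bornology.IsBounded O ∧ 0 ∈ O ∧
      (∀ x ∈ closure O, φ x ∈ WsLoc f ε q ∧ φ x ∈ C.e '' closedBall 0 ρ ∧
        ‖(C.e.symm (φ x)).2‖ < ρ / 2) ∧
      (∀ x ∈ frontier O, ‖(C.e.symm (φ x)).1‖ = ρ) := by
  obtain ⟨φ, hφc, hφi, hφ0, hφe, hφf⟩ := D.global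
  have hsub : closedBall (0 : Es × Eu) ρ ⊆ C.e.source := (closedBall_subset_closedBall hρ1).trans C.hsrc
  set N := C.e '' ball 0 ρ with hN
  have hNo : IsOpen N := C.e.isOpen_image_of_subset_source isOpen_ball (ball_subset_closedBall.trans hsub)
  have hNK : IsCompact (C.e '' closedBall 0 ρ) :=
    (isCompact_closedBall _ _).image_of_continuousOn (C.e.continuousOn.mono hsub)
  have hNcl : closure N ⊆ C.e '' closedBall 0 ρ :=
    closure_minimal (image_mono ball_subset_closedBall) hNK.isClosed
  have hPo : IsOpen (φ ⁻¹' N) := hNo.preimage hφc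
  have h0P : (0 : Es') ∈ φ ⁻¹' N := by simpa [hφ0] using hq
  set O := connectedComponentIn (φ ⁻¹' N) 0 with hO
  have hOo : IsOpen O := hPo.connectedComponentIn
  have h0O : (0 : Es') ∈ O := mem_connectedComponentIn h0P
  have hOP : O ⊆ φ ⁻¹' N := connectedComponentIn_subset _ _
  have hqd : ∀ x ∈ φ ⁻¹' N, dist q (φ x) ≤ δ := by
    intro x hx
    obtain ⟨z, hz, hzx⟩ := hx
    obtain ⟨w, hw, hwq⟩ := hq
    have h1 := hρδ z (ball_subset_closedBall hz)
    have h2 := hρδ w (ball_subset_closedBall hw)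
    rw [hzx] at h1
    rw [hwq] at h2
    have := dist_triangle_right q (φ x) p
    linarith
  let A : Set Es' := {x | φ x ∈ WsLoc f ε q}
  have hAc : IsClosed A := by
    have : Continuous fun x => (q, φ x) := by fun_prop
    exact (isClosed_WsRel f ε).preimage this
  obtain ⟨ρ₁, hρ₁, hρ₁1, hB⟩ := D.exB hε
  have hAn : ∀ x ∈ A, x ∈ φ ⁻¹' N → x ∈ interior A := by
    intro x hxA hxN
    have hlt := hδ q (φ x) (hqd x hxN) hxA
    obtain ⟨m, hm⟩ := pow_unbounded_of_one_lt (‖x‖ / ρ₁) (one_lt_two (α := ℝ))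
    rw [div_lt_iff₀ hρ₁] at hm
    have h1 : ∀ᶠ y in nhds x, ‖y‖ < 2 ^ m * ρ₁ :=
      continuous_norm.continuousAt.eventually (gt_mem_nhds hm)
    have h2 : ∀ i ∈ Finset.range (D.l * m), ∀ᶠ y in nhds x,
        dist (iterZ f i q) (iterZ f i (φ y)) < ε := by
      intro i _
      have hc : Continuous fun y => dist (iterZ f i q) (iterZ f i (φ y)) :=
        continuous_const.dist ((iterZ_cont f i).comp hφc)
      exact hc.continuousAt.eventually (gt_mem_nhds (hlt i (by positivity)))
    rw [mem_interior_iff_mem_nhds]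
    filter_upwards [h1, (Filter.eventually_all_finset _).2 h2] with y hy1 hy2
    intro k hk
    obtain ⟨K, rfl⟩ := Int.eq_ofNat_of_zero_le hk
    rcases lt_or_ge K (D.l * m) with h | h
    · exact (hy2 K (Finset.mem_range.2 h)).le
    · obtain ⟨j, rfl⟩ := Nat.exists_eq_add_of_le h
      have e1 : ((D.l * m + j : ℕ) : ℤ) = (j : ℤ) + (D.l * m : ℤ) := by push_cast; ring
      rw [e1, iterZ_add, iterZ_add, D.per_mul, hφf]
      have hle : ‖(1 / 2 : ℝ) ^ m • y‖ ≤ ρ₁ := by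
        rw [norm_smul, norm_pow, Real.norm_of_nonneg (by norm_num), one_div, inv_pow,
          inv_mul_eq_div, div_le_iff₀ (by positivity)]
        linarith
      rw [hφe _ (hle.trans hρ₁1)]
      exact hB _ hle _ (by positivity)
  have hOA : O ⊆ A := by
    have h0A : (0 : Es') ∈ A := by
      intro k hk; rw [hφ0, dist_self]; exact hε.le
    have hsubs : O ⊆ interior A := by
      refine isPreconnected_connectedComponentIn.subset_of_closure_inter_subset isOpen_interior
        ⟨0, h0O, hAn 0 h0A h0P⟩ ?_
      rintro x ⟨hx1, hx2⟩
      exact hAn x (closure_minimal interior_subset hAc hx1) (hOP hx2)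
    exact hsubs.trans interior_subset
  have hAhalf : ∀ x ∈ A, ∀ m : ℕ, (1 / 2 : ℝ) ^ m • x ∈ A := by
    intro x hx m k hk
    have := hx (k + D.l * m) (by positivity)
    rwa [iterZ_add, iterZ_add, D.per_mul, hφf] at this
  have hAb : Bornology.IsBounded A := by
    by_contra hnb
    let T : ℕ → Set Es' := fun i => {x | 1 / 2 ≤ ‖x‖ ∧ ‖x‖ ≤ 1 ∧ (2 : ℝ) ^ i • x ∈ A}
    have hTc : ∀ i, IsClosed (T i) := by
      intro i
      refine (isClosed_le continuous_const continuous_norm).inter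
        ((isClosed_le continuous_norm continuous_const).inter ?_)
      exact hAc.preimage (continuous_const_smul _)
    have hTdec : ∀ i, T (i + 1) ⊆ T i := by
      rintro i x ⟨h1, h2, h3⟩
      refine ⟨h1, h2, ?_⟩
      have := hAhalf _ h3 1
      rw [smul_smul, pow_succ] at this
      convert this using 2
      ring
    have hTne : ∀ i, (T i).Nonempty := by
      intro i
      obtain ⟨x, hxA, hx⟩ : ∃ x ∈ A, (2 : ℝ) ^ i < ‖x‖ := by
        by_contra! h
        exact hnb (isBounded_iff_forall_norm_le.2 ⟨_, h⟩)
      obtain ⟨m, hm1, hm2⟩ := exists_nat_pow_near (x := ‖x‖) (y := 2)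
        ((one_le_pow₀ (by norm_num)).trans hx.le) (by norm_num)
      have hmi : i ≤ m := by
        have : (2 : ℝ) ^ i < 2 ^ (m + 1) := hx.trans hm2
        have := (pow_lt_pow_iff_right₀ (by norm_num : (1 : ℝ) < 2)).1 this
        omega
      obtain ⟨j, rfl⟩ := Nat.exists_eq_add_of_le hmi
      have hn : ‖(1 / 2 : ℝ) ^ (i + j + 1) • x‖ = ‖x‖ / 2 ^ (i + j + 1) := by
        rw [norm_smul, norm_pow, Real.norm_of_nonneg (by norm_num), one_div, inv_pow,
          inv_mul_eq_div]
      refine ⟨(1 / 2 : ℝ) ^ (i + j + 1) • x, ?_, ?_, ?_⟩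
      · rw [hn, le_div_iff₀ (by positivity), pow_succ]
        linarith
      · rw [hn, div_le_one (by positivity)]
        exact hm2.le
      · have := hAhalf x hxA (j + 1)
        rw [smul_smul]
        convert this using 2
        rw [add_assoc, pow_add, ← mul_assoc, ← mul_pow]
        norm_num
    have hT0 : IsCompact (T 0) := by
      refine Metric.isCompact_of_isClosed_isBounded (hTc 0) ?_
      exact isBounded_iff_forall_norm_le.2 ⟨1, fun x hx => hx.2.1⟩
    obtain ⟨x, hx⟩ := IsCompact.nonempty_iInter_of_sequence_nonempty_isCompact_isClosed T hTdec
      hTne hT0 hTc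
    rw [mem_iInter] at hx
    have hx0 : x = 0 := by
      apply hφi
      rw [hφ0]
      by_contra hne
      obtain ⟨k, hk⟩ := hexp _ _ hne
      obtain ⟨m, hm⟩ : ∃ m : ℕ, 0 ≤ k + D.l * m := by
        refine ⟨k.natAbs, ?_⟩
        have h1 : (1 : ℤ) ≤ D.l := by exact_mod_cast D.hl
        have h2 : -k ≤ (k.natAbs : ℤ) := by omega
        have h3 : (0 : ℤ) ≤ (k.natAbs : ℤ) := by positivity
        nlinarith
      have h1 := (hx m).2.2 (k + D.l * m) hm
      rw [iterZ_add, iterZ_add, D.per_mul, hφf, smul_smul, ← mul_pow] at h1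
      norm_num at h1
      rw [dist_comm] at h1
      linarith
    have := (hx 0).1
    rw [hx0, norm_zero] at this
    norm_num at this
  have hclA : closure O ⊆ A := closure_minimal hOA hAc
  have hclN : ∀ x ∈ closure O, φ x ∈ C.e '' closedBall 0 ρ := fun x hx =>
    hNcl (map_mem_closure hφc hx (fun y hy => hOP hy))
  have hmain : ∀ x ∈ closure O, φ x ∈ WsLoc f ε q ∧ φ x ∈ C.e '' closedBall 0 ρ ∧
        ‖(C.e.symm (φ x)).2‖ < ρ / 2 := by
    intro x hx
    refine ⟨hclA hx, hclN x hx, ?_⟩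
    obtain ⟨z, hz, hzx⟩ := hclN x hx
    have := hclA hx
    rw [← hzx, C.e.left_inv (hsub hz)]
    exact hsc z hz (by rw [hzx]; exact hclA hx)
  refine ⟨φ, O, hφc, hφi, hφ0, hφe, hOo, hAb.subset hOA, h0O, hmain, ?_⟩
  intro x hx
  have hxcl : x ∈ closure O := hx.1
  have hxN : x ∉ φ ⁻¹' N := by
    intro hxN
    have hO' : IsOpen (connectedComponentIn (φ ⁻¹' N) x) := hPo.connectedComponentIn
    obtain ⟨y, hy1, hy2⟩ := mem_closure_iff.1 hxcl _ hO' (mem_connectedComponentIn hxN)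
    have e1 := connectedComponentIn_eq hy1
    have e2 := connectedComponentIn_eq hy2
    apply hx.2
    rw [hOo.interior_eq, hO, e2, ← e1]
    exact mem_connectedComponentIn hxN
  obtain ⟨-, ⟨z, hz, hzx⟩, hlt⟩ := hmain x hxcl
  rw [← hzx, C.e.left_inv (hsub hz)] at hlt ⊢
  have hz' : ‖z‖ ≤ ρ := by simpa using hz
  have hz2 : ρ ≤ ‖z‖ := by
    by_contra! h
    exact hxN ⟨z, by simpa using h, hzx⟩
  have : ‖z‖ = max ‖z.1‖ ‖z.2‖ := rfl
  rcases max_choice ‖z.1‖ ‖z.2‖ with h | h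
  · linarith
  · linarith


lemma intersection_lemma {Es Eu Es' Eu' : Type*} [NormedAddCommGroup Es] [NormedSpace ℝ Es]
    [NormedAddCommGroup Eu] [NormedSpace ℝ Eu] [NormedAddCommGroup Es'] [NormedSpace ℝ Es']
    [NormedAddCommGroup Eu'] [NormedSpace ℝ Eu'] [FiniteDimensional ℝ Es'] [FiniteDimensional ℝ Eu']
    (A : Es' → Es × Eu) (B : Eu' → Es × Eu) (Os : Set Es') (Ou : Set Eu')
    (hOs : IsOpen Os) (hOu : IsOpen Ou) (hOsb : Bornology.IsBounded Os)
    (hOub : Bornology.IsBounded Ou) (h0s : 0 ∈ Os) (h0u : 0 ∈ Ou)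
    (hA : ContinuousOn A (closure Os)) (hB : ContinuousOn B (closure Ou))
    (g : OpenPartialHomeomorph (Es' × Eu') (Es × Eu)) (hg : (0 : Es' × Eu') ∈ g.source)
    (hAg : ∀ᶠ x in nhds (0 : Es'), A x = g (x, 0)) (hBg : ∀ᶠ y in nhds (0 : Eu'), B y = g (0, y))
    (hAB : ∀ x ∈ closure Os, ∀ y ∈ closure Ou, A x = B y → x = 0 ∧ y = 0)
    (hfs : ∀ x ∈ frontier Os, ∀ y ∈ closure Ou, ‖(B y).1‖ < ‖(A x).1‖)
    (hfu : ∀ x ∈ closure Os, ∀ y ∈ frontier Ou, ‖(A x).2‖ < ‖(B y).2‖) :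
    ∃ x ∈ closure Os, (A x).1 = 0 := by
  by_contra! hcon
  set O : Set (Es' × Eu') := Os ×ˢ Ou with hO
  have hOo : IsOpen O := hOs.prod hOu
  have hOb : Bornology.IsBounded O := hOsb.prod hOub
  have h0O : (0 : Es' × Eu') ∈ O := ⟨h0s, h0u⟩
  have hcl : closure O = closure Os ×ˢ closure Ou := closure_prod_eq
  have hclc : IsCompact (closure O) := hOb.isCompact_closure
  have hAc : ContinuousOn (fun z : Es' × Eu' => A z.1) (closure O) :=
    hA.comp continuousOn_fst (fun z hz => by rw [hcl] at hz; exact hz.1)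
  have hBc : ContinuousOn (fun z : Es' × Eu' => B z.2) (closure O) :=
    hB.comp continuousOn_snd (fun z hz => by rw [hcl] at hz; exact hz.2)
  -- the modified map near the origin
  have hfst : Filter.Tendsto (Prod.fst : Es' × Eu' → Es') (nhds 0) (nhds 0) :=
    continuous_fst.tendsto _
  have hsnd : Filter.Tendsto (Prod.snd : Es' × Eu' → Eu') (nhds 0) (nhds 0) :=
    continuous_snd.tendsto _
  obtain ⟨η, hη, hηb⟩ := Metric.nhds_basis_closedBall.mem_iff.1 (Filter.inter_mem
    (Filter.inter_mem (hOo.mem_nhds h0O) (g.open_source.mem_nhds hg))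
    (Filter.inter_mem (hfst.eventually hAg) (hsnd.eventually hBg)))
  have hηO : ∀ z : Es' × Eu', ‖z‖ ≤ η → z ∈ O := fun z hz => (hηb (by simpa using hz)).1.1
  have hηg : ∀ z : Es' × Eu', ‖z‖ ≤ η → z ∈ g.source := fun z hz => (hηb (by simpa using hz)).1.2
  have hηA : ∀ z : Es' × Eu', ‖z‖ ≤ η → A z.1 = g (z.1, 0) := fun z hz => (hηb (by simpa using hz)).2.1
  have hηB : ∀ z : Es' × Eu', ‖z‖ ≤ η → B z.2 = g (0, z.2) := fun z hz => (hηb (by simpa using hz)).2.2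
  let lam : Es' × Eu' → ℝ := fun z => max 0 (min 1 (2 - 4 * ‖z‖ / η))
  have hlamc : Continuous lam := by fun_prop
  have hlam0 : ∀ z, 0 ≤ lam z := fun z => le_max_left _ _
  have hlam1 : ∀ z, lam z ≤ 1 := fun z => max_le zero_le_one (min_le_left _ _)
  have hlamin : ∀ z, ‖z‖ ≤ η / 4 → lam z = 1 := by
    intro z hz
    have : 4 * ‖z‖ / η ≤ 1 := by rw [div_le_one hη]; linarith
    simp only [lam]
    rw [min_eq_left (by linarith), max_eq_right zero_le_one]
  have hlamout : ∀ z, η / 2 ≤ ‖z‖ → lam z = 0 := by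
    intro z hz
    have : 2 ≤ 4 * ‖z‖ / η := by rw [le_div_iff₀ hη]; linarith
    simp only [lam]
    rw [max_eq_left]
    exact (min_le_right _ _).trans (by linarith)
  let H : Es' × Eu' → Es × Eu := fun z => g (z.1, -(lam z • z.2)) - g (0, (1 - lam z) • z.2)
  have hm1 : ∀ z : Es' × Eu', ‖z‖ ≤ η → (z.1, -(lam z • z.2)) ∈ g.source := by
    intro z hz
    apply hηg
    have h1 := norm_fst_le z
    have h2 := norm_snd_le z
    have h3 : ‖-(lam z • z.2)‖ ≤ ‖z.2‖ := by
      rw [norm_neg, norm_smul, Real.norm_of_nonneg (hlam0 z)]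
      nlinarith [hlam1 z, norm_nonneg z.2]
    exact max_le (h1.trans hz) (h3.trans (h2.trans hz))
  have hm2 : ∀ z : Es' × Eu', ‖z‖ ≤ η → ((0 : Es'), (1 - lam z) • z.2) ∈ g.source := by
    intro z hz
    apply hηg
    have h2 := norm_snd_le z
    have h3 : ‖(1 - lam z) • z.2‖ ≤ ‖z.2‖ := by
      rw [norm_smul, Real.norm_of_nonneg (by linarith [hlam1 z])]
      nlinarith [hlam0 z, norm_nonneg z.2]
    exact max_le (by simpa using hη.le) (h3.trans (h2.trans hz))
  have hHc : ∀ z, ‖z‖ ≤ η → ContinuousAt H z := by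
    intro z hz
    have c1 : ContinuousAt (fun z : Es' × Eu' => g (z.1, -(lam z • z.2))) z :=
      ContinuousAt.comp (f := fun z : Es' × Eu' => (z.1, -(lam z • z.2)))
        (g.continuousAt (hm1 z hz)) (by fun_prop)
    have c2 : ContinuousAt (fun z : Es' × Eu' => g (0, (1 - lam z) • z.2)) z :=
      ContinuousAt.comp (f := fun z : Es' × Eu' => ((0 : Es'), (1 - lam z) • z.2))
        (g.continuousAt (hm2 z hz)) (by fun_prop)
    exact c1.sub c2
  have hHout : ∀ z, ‖z‖ ≤ η → η / 2 ≤ ‖z‖ → H z = A z.1 - B z.2 := by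
    intro z hz hz'
    simp only [H]
    rw [hlamout z hz', hηA z hz, hηB z hz]
    simp
  have hH0 : ∀ z, ‖z‖ ≤ η → H z = 0 → z = 0 := by
    intro z hz h
    have h1 := g.injOn (hm1 z hz) (hm2 z hz) (sub_eq_zero.1 h)
    obtain ⟨h2, h3⟩ := Prod.ext_iff.1 h1
    simp only at h2 h3
    have h4 : z.2 = 0 := by
      rw [sub_smul, one_smul, sub_eq_add_neg, right_eq_add] at h3
      exact h3
    exact Prod.ext h2 h4
  classical
  let F : Es' × Eu' → Es × Eu := fun z => if ‖z‖ ≤ η then H z else A z.1 - B z.2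
  have hFout : ∀ z, η / 2 ≤ ‖z‖ → F z = A z.1 - B z.2 := by
    intro z hz
    simp only [F]
    split_ifs with h
    · exact hHout z h hz
    · rfl
  have hFc : ContinuousOn F (closure O) := by
    intro z hz
    rcases lt_or_ge ‖z‖ η with h | h
    · have hev : ∀ᶠ w in nhds z, ‖w‖ < η := continuous_norm.continuousAt.eventually (gt_mem_nhds h)
      refine ((hHc z h.le).congr ?_).continuousWithinAt
      filter_upwards [hev] with w hw
      simp [F, hw.le]
    · have hev : ∀ᶠ w in nhdsWithin z (closure O), η / 2 < ‖w‖ :=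
        (continuous_norm.continuousAt.eventually (lt_mem_nhds (by linarith))).filter_mono
          nhdsWithin_le_nhds
      refine ((hAc z hz).sub (hBc z hz)).congr_of_eventuallyEq ?_ (hFout z (by linarith))
      filter_upwards [hev] with w hw
      exact hFout w hw.le
  have hF0 : ∀ z ∈ closure O, F z = 0 → z = 0 := by
    intro z hz h
    by_cases hzη : ‖z‖ ≤ η
    · simp only [F, hzη, if_true] at h
      exact hH0 z hzη h
    · simp only [F, hzη, if_false] at h
      rw [hcl] at hz
      obtain ⟨h1, h2⟩ := hAB z.1 hz.1 z.2 hz.2 (sub_eq_zero.1 h)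
      exact Prod.ext h1 h2
  have hfrη : ∀ z ∈ frontier O, η < ‖z‖ := by
    intro z hz
    by_contra! h
    exact hz.2 (by rw [hOo.interior_eq]; exact hηO z h)
  -- the homotopy
  let G : ℝ → Es' × Eu' → Es × Eu := fun t z =>
    ((A z.1).1 - t • (B z.2).1, t • (A z.1).2 - (B z.2).2)
  have hGc : ContinuousOn (fun w : ℝ × (Es' × Eu') => G w.1 w.2) (univ ×ˢ closure O) := by
    have a1 : ContinuousOn (fun w : ℝ × (Es' × Eu') => A w.2.1) (univ ×ˢ closure O) :=
      hAc.comp continuousOn_snd (fun w hw => hw.2)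
    have b1 : ContinuousOn (fun w : ℝ × (Es' × Eu') => B w.2.2) (univ ×ˢ closure O) :=
      hBc.comp continuousOn_snd (fun w hw => hw.2)
    have t1 : ContinuousOn (fun w : ℝ × (Es' × Eu') => w.1) (univ ×ˢ closure O) := continuousOn_fst
    exact (a1.fst.sub (t1.smul b1.fst)).prodMk ((t1.smul a1.snd).sub b1.snd)
  let Z0 : Set (ℝ × (Es' × Eu')) := (Icc 0 1 ×ˢ closure O) ∩ (fun w => G w.1 w.2) ⁻¹' {0}
  have hZ0 : IsCompact Z0 := by
    have hK : IsCompact (Icc (0 : ℝ) 1 ×ˢ closure O) := isCompact_Icc.prod hclc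
    exact hK.of_isClosed_subset ((hGc.mono (prod_mono_left (subset_univ _))).preimage_isClosed_of_isClosed
      hK.isClosed isClosed_singleton) inter_subset_left
  have hZ : IsClosed (Prod.snd '' Z0) := (hZ0.image continuous_snd).isClosed
  have hdisj : Disjoint (Prod.snd '' Z0) (frontier O) := by
    rw [Set.disjoint_left]
    rintro _ ⟨⟨t, z⟩, ⟨⟨ht, hz⟩, h0⟩, rfl⟩ hfr
    have h0' : G t z = 0 := h0
    obtain ⟨h1, h2⟩ := Prod.ext_iff.1 h0'
    simp only [G, Prod.fst_zero, Prod.snd_zero, sub_eq_zero] at h1 h2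
    have hfr' : z ∈ frontier O := hfr
    rw [hO, frontier_prod_eq] at hfr'
    rcases hfr' with h | h
    · have h3 := hfu z.1 h.1 z.2 h.2
      rw [← h2, norm_smul, Real.norm_of_nonneg ht.1] at h3
      nlinarith [norm_nonneg (A z.1).2, ht.2]
    · have h3 := hfs z.1 h.1 z.2 h.2
      rw [h1, norm_smul, Real.norm_of_nonneg ht.1] at h3
      nlinarith [norm_nonneg (B z.2).1, ht.2]
  obtain ⟨τ, hτ0, hτ1, hτ⟩ := exists_continuous_zero_one_of_isClosed hZ isClosed_frontier hdisj
  have hF'c : ContinuousOn (fun z => G (τ z) z) (closure O) :=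
    hGc.comp (f := fun z => (τ z, z)) (by fun_prop) (fun z hz => ⟨mem_univ _, hz⟩)
  -- local homeomorphism
  let g' : OpenPartialHomeomorph (Es' × Eu') (Es × Eu) :=
    (((Homeomorph.refl Es').prodCongr (Homeomorph.neg Eu')).toOpenPartialHomeomorph.trans g).trans
      (Homeomorph.subRight (g 0)).toOpenPartialHomeomorph
  have hg' : ∀ z, g' z = g (z.1, -z.2) - g 0 := fun z => rfl
  obtain ⟨z, hz, hz0⟩ := ess_gen g' (by
      have h00 : ((0 : Es'), -(0 : Eu')) = 0 := by rw [neg_zero]; rfl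
      have h1 : ((0 : Es'), -(0 : Eu')) ∈ g.source := by rw [h00]; exact hg
      exact ⟨⟨mem_univ _, h1⟩, mem_univ _⟩) (by
      have h00 : ((0 : Es'), -(0 : Eu')) = 0 := by rw [neg_zero]; rfl
      rw [hg', Prod.fst_zero, Prod.snd_zero, h00, sub_self]) F (fun z => G (τ z) z) O hOo hOb h0O hFc
    hF'c (by
      intro z hz
      have := hτ1 hz
      simp only [Pi.one_apply] at this
      simp only [this]
      rw [hFout z (by linarith [hfrη z hz])]
      simp [G, Prod.ext_iff]) (by
      have hev : ∀ᶠ w in nhds (0 : Es' × Eu'), ‖w‖ < η / 4 :=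
        continuous_norm.continuousAt.eventually (gt_mem_nhds (by simpa using hη))
      filter_upwards [hev] with w hw
      have : ‖w‖ ≤ η := by linarith
      rw [hg']
      simp only [F, this, if_true, H, hlamin w hw.le]
      have h00 : ((0 : Es'), (0 : Eu')) = 0 := rfl
      simp [h00]) hF0
  have hzZ : z ∈ Prod.snd '' Z0 := ⟨(τ z, z), ⟨⟨hτ z, hz⟩, hz0⟩, rfl⟩
  have hτz := hτ0 hzZ
  simp only [Pi.zero_apply] at hτz
  simp only [hτz] at hz0
  rw [hcl] at hz
  have := (Prod.ext_iff.1 hz0).1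
  simp only [G, zero_smul, sub_zero, Prod.fst_zero] at this
  exact hcon z.1 hz.1 this


lemma semi [CompactSpace M] {Es Eu : Type*} [NormedAddCommGroup Es] [NormedSpace ℝ Es]
    [NormedAddCommGroup Eu] [NormedSpace ℝ Eu] [FiniteDimensional ℝ Es] [FiniteDimensional ℝ Eu]
    {f : M ≃ₜ M} {ε ρ : ℝ} {p : M} (C : HypChart f p Es Eu) (hρ : 0 < ρ) (hρ1 : ρ ≤ 1)
    (hAs : ∀ y ∈ WsLoc f ε p, ∃ a : Es, ‖a‖ ≤ 1 ∧ y = C.e (a, 0)) :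
    ∀ᶠ q in nhds p, ∀ z ∈ closedBall (0 : Es × Eu) ρ, C.e z ∈ WsLoc f ε q → ‖z.2‖ < ρ / 2 := by
  have hsub : closedBall (0 : Es × Eu) ρ ⊆ C.e.source :=
    (closedBall_subset_closedBall hρ1).trans C.hsrc
  let K : Set (Es × Eu) := closedBall 0 ρ ∩ {z | ρ / 2 ≤ ‖z.2‖}
  have hK : IsCompact K := (isCompact_closedBall _ _).inter_right
    (isClosed_le continuous_const (continuous_norm.comp continuous_snd))
  let S : Set (M × (Es × Eu)) := (univ ×ˢ K) ∩
    (fun w : M × (Es × Eu) => (w.1, C.e w.2)) ⁻¹' {z : M × M | z.2 ∈ WsLoc f ε z.1}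
  have hUK : IsCompact ((univ : Set M) ×ˢ K) := isCompact_univ.prod hK
  have hS : IsCompact S := by
    refine hUK.of_isClosed_subset (ContinuousOn.preimage_isClosed_of_isClosed ?_ hUK.isClosed
      (isClosed_WsRel f ε)) inter_subset_left
    refine continuousOn_fst.prodMk (C.e.continuousOn.comp continuousOn_snd ?_)
    intro w hw
    exact hsub hw.2.1
  have hT : IsClosed (Prod.fst '' S) := (hS.image continuous_fst).isClosed
  have hp : p ∉ Prod.fst '' S := by
    rintro ⟨⟨q, z⟩, ⟨⟨-, hz⟩, hw⟩, hq⟩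
    simp only at hq
    subst hq
    obtain ⟨a, ha, hza⟩ := hAs _ hw
    have : z = (a, 0) := C.e.injOn (hsub hz.1) (C.mem_source ha (by simp)) hza
    have h2 : ρ / 2 ≤ ‖z.2‖ := hz.2
    rw [this, norm_zero] at h2
    linarith
  filter_upwards [hT.isOpen_compl.mem_nhds hp] with q hq z hz hw
  by_contra! h
  exact hq ⟨(q, z), ⟨⟨mem_univ _, hz, h⟩, hw⟩, rfl⟩

lemma lemmaA [CompactSpace M] {Es Eu : Type*} [NormedAddCommGroup Es] [NormedSpace ℝ Es]
    [NormedAddCommGroup Eu] [NormedSpace ℝ Eu] [FiniteDimensional ℝ Es] [FiniteDimensional ℝ Eu]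
    {f : M ≃ₜ M} {α ε : ℝ} {p : M} (hexp : IsExpansive f α) (hε : 0 < ε) (hεα : ε ≤ α)
    (C : HypChart f p Es Eu)
    (hAs : ∀ y ∈ WsLoc f ε p, ∃ a : Es, ‖a‖ ≤ 1 ∧ y = C.e (a, 0))
    (hAu : ∀ y ∈ WuLoc f ε p, ∃ b : Eu, ‖b‖ ≤ 1 ∧ y = C.e (0, b)) :
    ∃ ρ₀ > 0, ρ₀ ≤ 1 ∧ ∀ ρ, 0 < ρ → ρ ≤ ρ₀ → ∀ᶠ q in nhds p,
      ∀ (r s : ℕ) (_ : HypChart f q (Fin r → ℝ) (Fin s → ℝ)),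
        ∃ b : Eu, ‖b‖ ≤ ρ ∧ C.e (0, b) ∈ WsLoc f ε q := by
  obtain ⟨δ₁, hδ₁, hg1⟩ := gap hexp hε hεα
  obtain ⟨δ₂, hδ₂, hg2⟩ := gap hexp.symm hε hεα
  set δ := min δ₁ δ₂ with hδdef
  have hδ : 0 < δ := lt_min hδ₁ hδ₂
  have h0s : (0 : Es × Eu) ∈ C.e.source := C.hsrc (by simp)
  have hev : ∀ᶠ z in nhds (0 : Es × Eu), dist (C.e z) p < δ / 2 := by
    have hc : ContinuousAt (fun z => dist (C.e z) p) 0 :=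
      (C.e.continuousAt h0s).dist continuousAt_const
    refine hc.eventually (gt_mem_nhds ?_)
    change dist (C.e 0) p < δ / 2
    rw [C.e0, dist_self]; positivity
  obtain ⟨ρ₁, hρ₁, hρ₁b⟩ := Metric.nhds_basis_closedBall.mem_iff.1 hev
  refine ⟨min ρ₁ 1, by positivity, min_le_right _ _, fun ρ hρ hρle => ?_⟩
  have hρ1 : ρ ≤ 1 := hρle.trans (min_le_right _ _)
  have hsub : closedBall (0 : Es × Eu) ρ ⊆ C.e.source :=
    (closedBall_subset_closedBall hρ1).trans C.hsrc
  have hρδ : ∀ z ∈ closedBall (0 : Es × Eu) ρ, dist (C.e z) p ≤ δ / 2 := fun z hz =>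
    (hρ₁b (closedBall_subset_closedBall (hρle.trans (min_le_left _ _)) hz)).le
  have hswap : ∀ (t : Set ℝ) (z : Eu × Es), ‖z‖ ∈ t → ‖z.swap‖ ∈ t := by
    intro t z hz
    have : ‖z.swap‖ = ‖z‖ := by simp [Prod.norm_def, max_comm]
    rwa [this]
  have hN : C.e '' ball 0 ρ ∈ nhds p := by
    have := C.e.image_mem_nhds h0s (ball_mem_nhds _ hρ)
    rwa [C.e0] at this
  have hAu' : ∀ y ∈ WsLoc f.symm ε p, ∃ b : Eu, ‖b‖ ≤ 1 ∧ y = C.symm.e (b, 0) := by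
    intro y hy
    rw [WsLoc_symm] at hy
    exact hAu y hy
  filter_upwards [hN, semi C hρ hρ1 hAs, semi C.symm hρ hρ1 hAu'] with q hq hs1 hs2 r s D
  obtain ⟨φ, Os, hφc, hφi, hφ0, hφe, hOs, hOsb, h0Os, hφm, hφfr⟩ := local_leaf hexp hε hεα
    (fun x y h => hg1 x y (h.trans (min_le_left _ _))) C hρ hρ1 hρδ hq hs1 D
  obtain ⟨ψ, Ou, hψc, hψi, hψ0, hψe, hOu, hOub, h0Ou, hψm, hψfr⟩ := local_leaf hexp.symm hε hεα
    (fun x y h => hg2 x y (h.trans (min_le_right _ _))) C.symm hρ hρ1 (by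
      intro z hz
      refine hρδ z.swap ?_
      rw [mem_closedBall, dist_zero_right] at hz ⊢
      exact hswap (Iic ρ) z hz) (by
      obtain ⟨z, hz, hzq⟩ := hq
      refine ⟨z.swap, ?_, hzq⟩
      rw [mem_ball, dist_zero_right] at hz ⊢
      have : ‖z.swap‖ = ‖z‖ := by simp [Prod.norm_def, max_comm]
      rwa [this]) hs2 D.symm
  have hCs : ∀ m, C.symm.e.symm m = (C.e.symm m).swap := fun m => rfl
  have hψm' : ∀ y ∈ closure Ou, ψ y ∈ C.e '' closedBall 0 ρ := by
    intro y hy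
    obtain ⟨-, ⟨z, hz, hzy⟩, -⟩ := hψm y hy
    refine ⟨z.swap, ?_, hzy⟩
    rw [mem_closedBall, dist_zero_right] at hz ⊢
    exact hswap (Iic ρ) z hz
  have htgt : C.e '' closedBall 0 ρ ⊆ C.e.target := by
    rintro _ ⟨z, hz, rfl⟩
    exact C.e.map_source (hsub hz)
  obtain ⟨x, hx, hx0⟩ := intersection_lemma (fun x => C.e.symm (φ x)) (fun y => C.e.symm (ψ y))
    Os Ou hOs hOu hOsb hOub h0Os h0Ou
    (C.e.continuousOn_symm.comp hφc.continuousOn (fun x hx => htgt (hφm x hx).2.1))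
    (C.e.continuousOn_symm.comp hψc.continuousOn (fun y hy => htgt (hψm' y hy)))
    (D.e.trans C.e.symm) (by
      refine ⟨D.hsrc (by simp), ?_⟩
      change D.e 0 ∈ C.e.target
      rw [D.e0]
      exact htgt (image_mono ball_subset_closedBall hq))
    (by
      filter_upwards [closedBall_mem_nhds (0 : Fin r → ℝ) one_pos] with x hx
      rw [hφe x (by simpa using hx)]; rfl)
    (by
      filter_upwards [closedBall_mem_nhds (0 : Fin s → ℝ) one_pos] with x hx
      rw [hψe x (by simpa using hx)]; rfl)
    (by
      intro x hx y hy hxy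
      have h1 : φ x = ψ y := C.e.symm.injOn (htgt (hφm x hx).2.1) (htgt (hψm' y hy)) hxy
      have h2 := (hφm x hx).1
      have h3 := (hψm y hy).1
      rw [WsLoc_symm, ← h1] at h3
      have h4 := eq_of_Ws_Wu hexp (WsLoc_mono hεα h2) (WuLoc_mono hεα h3)
      exact ⟨hφi (by rw [← h4, hφ0]), hψi (by rw [← h1, ← h4, hψ0])⟩)
    (by
      intro x hx y hy
      rw [hφfr x hx]
      have := (hψm y hy).2.2
      rw [hCs] at this
      simp only [Prod.snd_swap] at this
      linarith)
    (by
      intro x hx y hy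
      have h1 := hψfr y hy
      rw [hCs] at h1
      simp only [Prod.fst_swap] at h1
      rw [h1]
      have := (hφm x hx).2.2
      linarith)
  obtain ⟨hw, ⟨z, hz, hzx⟩, -⟩ := hφm x hx
  simp only [← hzx, C.e.left_inv (hsub hz)] at hx0
  refine ⟨z.2, (norm_snd_le z).trans (by simpa using hz), ?_⟩
  rw [← hx0]
  change C.e z ∈ _
  rwa [hzx]


lemma proj_exists [CompactSpace M] {Es Eu : Type*} [NormedAddCommGroup Es] [NormedSpace ℝ Es]
    [NormedAddCommGroup Eu] [NormedSpace ℝ Eu] [FiniteDimensional ℝ Es] [FiniteDimensional ℝ Eu]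
    {f : M ≃ₜ M} {α ε : ℝ} {p : M} (hexp : IsExpansive f α) (hε : 0 < ε) (hεα : 4 * ε ≤ α)
    (C : HypChart f p Es Eu)
    (hAs : ∀ y ∈ WsLoc f ε p, ∃ a : Es, ‖a‖ ≤ 1 ∧ y = C.e (a, 0))
    (hAu : ∀ y ∈ WuLoc f ε p, ∃ b : Eu, ‖b‖ ≤ 1 ∧ y = C.e (0, b))
    (hQ : Dense {q | ∃ r s : ℕ, Nonempty (HypChart f q (Fin r → ℝ) (Fin s → ℝ))}) :
    ∃ W : Set M, IsOpen W ∧ p ∈ W ∧ ∃ π : M → Eu, ContinuousOn π W ∧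
      ∀ x ∈ W, ∀ y ∈ W, (π x = π y ↔ y ∈ WsLoc f (2 * ε) x) := by
  obtain ⟨ρ₀, hρ₀, hρ₀1, hρ⟩ := lemmaA hexp hε (by linarith) C hAs hAu
  obtain ⟨ρ₁, hρ₁, hρ₁1, hB⟩ := C.symm.exB hε
  set ρ := min ρ₀ ρ₁ with hρdef
  have hρpos : 0 < ρ := lt_min hρ₀ hρ₁
  have hρ1 : ρ ≤ 1 := (min_le_left _ _).trans hρ₀1
  have hev := hρ ρ hρpos (min_le_left _ _)
  obtain ⟨W, hW, hWo, hpW⟩ := _root_.eventually_nhds_iff.1 hev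
  have hBu : ∀ b : Eu, ‖b‖ ≤ ρ → C.e (0, b) ∈ WuLoc f ε p := by
    intro b hb
    have := hB b (hb.trans (min_le_right _ _))
    rw [WsLoc_symm] at this
    exact this
  have huniq : ∀ b b' : Eu, ‖b‖ ≤ ρ → ‖b'‖ ≤ ρ → C.e (0, b') ∈ WsLoc f (4 * ε) (C.e (0, b)) →
      b = b' := by
    intro b b' hb hb' h
    have h1 := WuLoc_trans (WuLoc_comm (hBu b hb)) (hBu b' hb')
    have h2 := eq_of_Ws_Wu hexp (WsLoc_mono hεα h) (WuLoc_mono (by linarith) h1)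
    exact (C.injOn (by simp) (hb.trans hρ1) (by simp) (hb'.trans hρ1) h2).2
  have hclosed : ∀ K : Set Eu, IsCompact K → K ⊆ closedBall 0 ρ →
      IsClosed {q | ∃ b ∈ K, C.e (0, b) ∈ WsLoc f ε q} := by
    intro K hK hKs
    let S : Set (M × Eu) := (univ ×ˢ K) ∩
      (fun w : M × Eu => (w.1, C.e (0, w.2))) ⁻¹' {z : M × M | z.2 ∈ WsLoc f ε z.1}
    have hUK : IsCompact ((univ : Set M) ×ˢ K) := isCompact_univ.prod hK
    have hS : IsCompact S := by
      refine hUK.of_isClosed_subset (ContinuousOn.preimage_isClosed_of_isClosed ?_ hUK.isClosed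
        (isClosed_WsRel f ε)) inter_subset_left
      refine continuousOn_fst.prodMk (C.e.continuousOn.comp
        (f := fun w : M × Eu => ((0 : Es), w.2)) (by fun_prop) ?_)
      intro w hw
      have : ‖w.2‖ ≤ ρ := by simpa using hKs hw.2
      exact C.mem_source (by simp) (this.trans hρ1)
    have hT : IsClosed (Prod.fst '' S) := (hS.image continuous_fst).isClosed
    convert hT using 1
    ext q
    constructor
    · rintro ⟨b, hb, h⟩
      exact ⟨(q, b), ⟨⟨mem_univ _, hb⟩, h⟩, rfl⟩
    · rintro ⟨⟨q', b⟩, ⟨⟨-, hb⟩, h⟩, rfl⟩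
      exact ⟨b, hb, h⟩
  have hex : ∀ x ∈ W, ∃ b : Eu, ‖b‖ ≤ ρ ∧ C.e (0, b) ∈ WsLoc f ε x := by
    intro x hx
    have h1 : x ∈ closure (W ∩ {q | ∃ r s : ℕ, Nonempty (HypChart f q (Fin r → ℝ) (Fin s → ℝ))}) :=
      hQ.open_subset_closure_inter hWo hx
    have h2 := closure_minimal (t := {q | ∃ b ∈ closedBall (0 : Eu) ρ, C.e (0, b) ∈ WsLoc f ε q}) (by
      rintro q ⟨hq, r, s, ⟨D⟩⟩
      obtain ⟨b, hb, h⟩ := hW q hq r s D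
      exact ⟨b, by simpa using hb, h⟩) (hclosed _ (isCompact_closedBall _ _) subset_rfl) h1
    obtain ⟨b, hb, h⟩ := h2
    exact ⟨b, by simpa using hb, h⟩
  classical
  let π : M → Eu := fun x => if hx : x ∈ W then (hex x hx).choose else 0
  have hπ1 : ∀ x ∈ W, ‖π x‖ ≤ ρ := by
    intro x hx
    simp only [π, hx, dif_pos]
    exact (hex x hx).choose_spec.1
  have hπ2 : ∀ x ∈ W, C.e (0, π x) ∈ WsLoc f ε x := by
    intro x hx
    simp only [π, hx, dif_pos]
    exact (hex x hx).choose_spec.2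
  refine ⟨W, hWo, hpW, π, ?_, ?_⟩
  · intro x hx
    rw [ContinuousWithinAt, Filter.tendsto_def]
    intro V hV
    obtain ⟨V', hV'V, hV'o, hxV'⟩ := _root_.mem_nhds_iff.1 hV
    have hcl := hclosed (closedBall 0 ρ \ V') ((isCompact_closedBall _ _).diff hV'o) diff_subset
    have hxn : x ∉ {q | ∃ b ∈ closedBall (0 : Eu) ρ \ V', C.e (0, b) ∈ WsLoc f ε q} := by
      rintro ⟨b, ⟨hb, hbV⟩, h⟩
      have h1 := WsLoc_trans (WsLoc_comm (hπ2 x hx)) h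
      have := huniq _ _ (hπ1 x hx) (by simpa using hb) (WsLoc_mono (by linarith) h1)
      rw [← this] at hbV
      exact hbV hxV'
    filter_upwards [mem_nhdsWithin_of_mem_nhds (hcl.isOpen_compl.mem_nhds hxn),
      self_mem_nhdsWithin] with y hy hyW
    apply hV'V
    by_contra hc
    exact hy ⟨π y, ⟨by simpa using hπ1 y hyW, hc⟩, hπ2 y hyW⟩
  · intro x hx y hy
    constructor
    · intro h
      have h1 := hπ2 y hy
      rw [← h] at h1
      exact WsLoc_mono (by linarith) (WsLoc_trans (hπ2 x hx) (WsLoc_comm h1))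
    · intro h
      have h1 := WsLoc_trans (WsLoc_comm (hπ2 x hx)) (WsLoc_trans h (hπ2 y hy))
      exact huniq _ _ (hπ1 x hx) (hπ1 y hy) (WsLoc_mono (by linarith) h1)

lemma lps_of_chart [CompactSpace M] {f : M ≃ₜ M} {α : ℝ} {p : M} (hα : 0 < α)
    (hexp : IsExpansive f α) {n k : ℕ}
    (C : HypChart f p (Fin (n - k) → ℝ) (Fin k → ℝ))
    (hQ : Dense {q | ∃ r s : ℕ, Nonempty (HypChart f q (Fin r → ℝ) (Fin s → ℝ))}) :
    AdmitsLPS f n p := by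
  obtain ⟨ε₁, hε₁, hs⟩ := C.exA
  obtain ⟨ε₂, hε₂, hu⟩ := C.symm.exA
  obtain ⟨ε, hε, h4, h1, h2⟩ : ∃ ε > 0, 4 * ε ≤ α ∧ ε ≤ ε₁ ∧ ε ≤ ε₂ := by
    refine ⟨min (α / 4) (min ε₁ ε₂), by positivity, ?_, ?_, ?_⟩
    · linarith [min_le_left (α / 4) (min ε₁ ε₂)]
    · exact (min_le_right _ _).trans (min_le_left _ _)
    · exact (min_le_right _ _).trans (min_le_right _ _)
  have hs' : ∀ y ∈ WsLoc f ε p, ∃ a : Fin (n - k) → ℝ, ‖a‖ ≤ 1 ∧ y = C.e (a, 0) :=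
    fun y hy => hs y (WsLoc_mono h1 hy)
  have hu' : ∀ y ∈ WsLoc f.symm ε p, ∃ b : Fin k → ℝ, ‖b‖ ≤ 1 ∧ y = C.symm.e (b, 0) :=
    fun y hy => hu y (WsLoc_mono h2 hy)
  obtain ⟨W₁, hW₁, hpW₁, πu, hπu, hπu'⟩ := proj_exists hexp hε h4 C hs' (by
    intro y hy
    rw [← WsLoc_symm] at hy
    exact hu' y hy) hQ
  obtain ⟨W₂, hW₂, hpW₂, πs, hπs, hπs'⟩ := proj_exists hexp.symm hε h4 C.symm hu' (by
    intro y hy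
    rw [WuLoc_symm] at hy
    exact hs' y hy) (by
    refine hQ.mono ?_
    rintro q ⟨r, s, ⟨D⟩⟩
    exact ⟨s, r, ⟨D.symm⟩⟩)
  let W := W₁ ∩ W₂
  let Pr : M → (Fin k → ℝ) × (Fin (n - k) → ℝ) := fun x => (πu x, πs x)
  have hPrc : ContinuousOn Pr W := (hπu.mono inter_subset_left).prodMk (hπs.mono inter_subset_right)
  have hu2 : ∀ x ∈ W, ∀ y ∈ W, (πu x = πu y ↔ y ∈ WsLoc f (2 * ε) x) :=
    fun x hx y hy => hπu' x hx.1 y hy.1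
  have hs2 : ∀ x ∈ W, ∀ y ∈ W, (πs x = πs y ↔ y ∈ WuLoc f (2 * ε) x) := by
    intro x hx y hy
    rw [hπs' x hx.2 y hy.2, WsLoc_symm]
  have hPri : InjOn Pr W := by
    intro x hx y hy h
    obtain ⟨ha, hb⟩ := Prod.ext_iff.1 h
    exact eq_of_Ws_Wu hexp (WsLoc_mono (by linarith) ((hu2 x hx y hy).1 ha))
      (WuLoc_mono (by linarith) ((hs2 x hx y hy).1 hb))
  let U : Set ((Fin (n - k) → ℝ) × (Fin k → ℝ)) := C.e.source ∩ C.e ⁻¹' W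
  have hU : IsOpen U := C.e.isOpen_inter_preimage (hW₁.inter hW₂)
  let G : (Fin (n - k) → ℝ) × (Fin k → ℝ) → (Fin k → ℝ) × (Fin (n - k) → ℝ) := fun z => Pr (C.e z)
  have hGc : ContinuousOn G U := hPrc.comp (C.e.continuousOn.mono inter_subset_left) (fun z hz => hz.2)
  have hGi : InjOn G U := fun x hx y hy h => C.e.injOn hx.1 hy.1 (hPri hx.2 hy.2 h)
  let G' : OpenPartialHomeomorph ((Fin (n - k) → ℝ) × (Fin k → ℝ))
      ((Fin k → ℝ) × (Fin (n - k) → ℝ)) :=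
    OpenPartialHomeomorph.ofContinuousOpenRestrict (hGi.toPartialEquiv G U) hGc (by
      intro V hV
      obtain ⟨V', hV', rfl⟩ := isOpen_induced_iff.1 hV
      have := iod (by simp [add_comm]) G (U ∩ V') (hU.inter hV') (hGc.mono inter_subset_left)
        (hGi.mono inter_subset_left)
      refine (congrArg IsOpen ?_).mpr this
      ext w
      constructor
      · rintro ⟨z, hz, rfl⟩
        exact ⟨z, ⟨z.2, hz⟩, rfl⟩
      · rintro ⟨z, hz, rfl⟩
        exact ⟨⟨z, hz.1⟩, hz.2, rfl⟩) hU
  have h0U : (0 : (Fin (n - k) → ℝ) × (Fin k → ℝ)) ∈ U := by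
    refine ⟨C.hsrc (by simp), ?_⟩
    change C.e 0 ∈ W
    rw [C.e0]
    exact ⟨hpW₁, hpW₂⟩
  let T := G'.symm.trans C.e
  have hTt : ∀ w ∈ G'.target, w ∈ T.source ∧ T w ∈ W ∧ Pr (T w) = w := by
    intro w hw
    have hm : G'.symm w ∈ U := G'.map_target hw
    refine ⟨⟨hw, hm.1⟩, hm.2, ?_⟩
    exact G'.right_inv hw
  have hpt : Pr p ∈ G'.target := by
    have : G' 0 ∈ G'.target := G'.map_source h0U
    change Pr (C.e 0) ∈ _ at this
    rwa [C.e0] at this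
  have hTp : T (Pr p) = p := hPri (hTt _ hpt).2.1 ⟨hpW₁, hpW₂⟩ (hTt _ hpt).2.2
  obtain ⟨η, hη, hηb⟩ := Metric.mem_nhds_iff.1 (G'.open_target.mem_nhds hpt)
  let B1 : OpenPartialHomeomorph (Fin k → ℝ) (Fin k → ℝ) := OpenPartialHomeomorph.univBall (πu p) η
  let B2 : OpenPartialHomeomorph (Fin (n - k) → ℝ) (Fin (n - k) → ℝ) :=
    OpenPartialHomeomorph.univBall (πs p) η
  have hB1 : ∀ x, B1 x ∈ ball (πu p) η := by
    intro x
    rw [← OpenPartialHomeomorph.univBall_target (πu p) hη]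
    exact B1.map_source (by simp [B1, OpenPartialHomeomorph.univBall_source])
  have hB2 : ∀ x, B2 x ∈ ball (πs p) η := by
    intro x
    rw [← OpenPartialHomeomorph.univBall_target (πs p) hη]
    exact B2.map_source (by simp [B2, OpenPartialHomeomorph.univBall_source])
  have hB1i : Function.Injective B1 := by
    intro x y h
    exact B1.injOn (by simp [B1, OpenPartialHomeomorph.univBall_source])
      (by simp [B1, OpenPartialHomeomorph.univBall_source]) h
  have hB2i : Function.Injective B2 := by
    intro x y h
    exact B2.injOn (by simp [B2, OpenPartialHomeomorph.univBall_source])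
      (by simp [B2, OpenPartialHomeomorph.univBall_source]) h
  have hBm : ∀ x y, (B1 x, B2 y) ∈ G'.target := by
    intro x y
    apply hηb
    rw [← Prod.mk.eta (p := Pr p), ← ball_prod_same]
    exact ⟨hB1 x, hB2 y⟩
  let P := (B1.prod B2).trans T
  have hPs : P.source = univ := by
    rw [eq_univ_iff_forall]
    rintro ⟨x, y⟩
    refine ⟨?_, (hTt _ (hBm x y)).1⟩
    simp [B1, B2, OpenPartialHomeomorph.univBall_source]
  have hPe : ∀ x y, P (x, y) = T (B1 x, B2 y) := fun x y => rfl
  have hPW : ∀ x y, P (x, y) ∈ W := fun x y => (hTt _ (hBm x y)).2.1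
  have hPu : ∀ x y, πu (P (x, y)) = B1 x := fun x y =>
    (Prod.ext_iff.1 (hTt _ (hBm x y)).2.2).1
  have hPs2 : ∀ x y, πs (P (x, y)) = B2 y := fun x y =>
    (Prod.ext_iff.1 (hTt _ (hBm x y)).2.2).2
  refine ⟨k, P, 2 * ε, by positivity, (P.isOpenEmbedding hPs).isEmbedding, ?_, ?_⟩
  · refine ⟨(0, 0), ?_⟩
    rw [hPe]
    have e1 : B1 0 = πu p := OpenPartialHomeomorph.univBall_apply_zero _ _
    have e2 : B2 0 = πs p := OpenPartialHomeomorph.univBall_apply_zero _ _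
    rw [e1, e2]
    exact hTp
  · intro x y
    constructor
    · ext w
      constructor
      · rintro ⟨⟨x', y'⟩, ⟨hx', -⟩, rfl⟩
        have hx'' : x' = x := hx'
        subst hx''
        refine ⟨(hu2 _ (hPW _ _) _ (hPW _ _)).1 ?_, ⟨_, rfl⟩⟩
        rw [hPu, hPu]
      · rintro ⟨hw, ⟨⟨x', y'⟩, rfl⟩⟩
        have := (hu2 _ (hPW _ _) _ (hPW _ _)).2 hw
        rw [hPu, hPu] at this
        exact ⟨(x', y'), ⟨(hB1i this).symm, mem_univ _⟩, rfl⟩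
    · ext w
      constructor
      · rintro ⟨⟨x', y'⟩, ⟨-, hy'⟩, rfl⟩
        have hy'' : y' = y := hy'
        subst hy''
        refine ⟨(hs2 _ (hPW _ _) _ (hPW _ _)).1 ?_, ⟨_, rfl⟩⟩
        rw [hPs2, hPs2]
      · rintro ⟨hw, ⟨⟨x', y'⟩, rfl⟩⟩
        have := (hs2 _ (hPW _ _) _ (hPW _ _)).2 hw
        rw [hPs2, hPs2] at this
        exact ⟨(x', y'), ⟨mem_univ _, (hB2i this).symm⟩, rfl⟩


lemma isOpen_range_of_emb {n k : ℕ} [ChartedSpace (EuclideanSpace ℝ (Fin n)) M]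
    (h : (Fin k → ℝ) × (Fin (n - k) → ℝ) → M) (hh : Topology.IsEmbedding h) :
    IsOpen (Set.range h) := by
  rw [isOpen_iff_mem_nhds]
  rintro _ ⟨z, rfl⟩
  let c := chartAt (EuclideanSpace ℝ (Fin n)) (h z)
  have hz : h z ∈ c.source := mem_chart_source _ _
  let U := h ⁻¹' c.source
  have hU : IsOpen U := c.open_source.preimage hh.continuous
  have hc : ContinuousOn (fun w => c (h w)) U :=
    c.continuousOn.comp hh.continuous.continuousOn (fun w hw => hw)
  have hi : InjOn (fun w => c (h w)) U := fun a ha b hb hab =>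
    hh.injective (c.injOn ha hb hab)
  rcases Nat.lt_or_ge n k with hk | hk
  · exact (iod_lt (by simp; omega) _ U hU ⟨z, hz⟩ hc hi).elim
  · have ho := iod (by simp; omega) _ U hU hc hi
    have h2 := c.isOpen_inter_preimage ho
    refine Filter.mem_of_superset (h2.mem_nhds ⟨hz, ⟨z, hz, rfl⟩⟩) ?_
    rintro y ⟨hy, ⟨w, hw, hwy⟩⟩
    exact ⟨w, c.injOn hw hy hwy⟩

lemma lps_of_chart_eq [CompactSpace M] {f : M ≃ₜ M} {α : ℝ} {p : M} (hα : 0 < α)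
    (hexp : IsExpansive f α) {n k r : ℕ} (hr : r = n - k)
    (C : HypChart f p (Fin r → ℝ) (Fin k → ℝ))
    (hQ : Dense {q | ∃ r s : ℕ, Nonempty (HypChart f q (Fin r → ℝ) (Fin s → ℝ))}) :
    AdmitsLPS f n p := by
  subst hr
  exact lps_of_chart hα hexp C hQ

theorem stmt0 {M : Type*} [MetricSpace M] [CompactSpace M] [ConnectedSpace M]
    (n : ℕ) [ChartedSpace (EuclideanSpace ℝ (Fin n)) M]
    (f : M ≃ₜ M) (α : ℝ) (hα : 0 < α) (hexp : IsExpansive f α)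
    (hdense : closure (PerH f n) = Set.univ) :
    (∀ p ∈ PerH f n, AdmitsLPS f n p) ∧
      IsOpen {p : M | AdmitsLPS f n p} ∧ Dense {p : M | AdmitsLPS f n p} := by
  have hd : Dense (PerH f n) := dense_iff_closure_eq.2 hdense
  have hmem : ∀ p ∈ PerH f n, ∃ r ≤ n, p ∈ PerHr f n r := by
    intro p hp
    simp only [PerH, Set.mem_iUnion, Finset.mem_range] at hp
    obtain ⟨r, hr, hp⟩ := hp
    exact ⟨r, by omega, hp⟩
  have hQ : Dense {q | ∃ r s : ℕ, Nonempty (HypChart f q (Fin r → ℝ) (Fin s → ℝ))} := by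
    refine hd.mono ?_
    intro q hq
    obtain ⟨r, -, hq⟩ := hmem q hq
    exact ⟨r, n - r, exists_chart hq⟩
  have hmain : ∀ p ∈ PerH f n, AdmitsLPS f n p := by
    intro p hp
    obtain ⟨r, hr, hp⟩ := hmem p hp
    obtain ⟨C⟩ := exists_chart hp
    exact lps_of_chart_eq hα hexp (by omega) C hQ
  refine ⟨hmain, ?_, hd.mono hmain⟩
  rw [isOpen_iff_mem_nhds]
  rintro p ⟨k, h, ε, hε, hh, hp, hL⟩
  refine Filter.mem_of_superset ((isOpen_range_of_emb h hh).mem_nhds hp) ?_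
  intro q hq
  exact ⟨k, h, ε, hε, hh, hq, hL⟩
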